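/- For integers m, n with −1 ≤ m < n, if L_m = L_n then m ≤ 35731. -/

import Mathlib

open Polynomial

/-- The simplest cubic polynomial `f_m(X) = X³ − mX² − (m+3)X − 1` over `ℚ`. -/
noncomputable def f (m : ℤ) : ℚ[X] :=
  X ^ 3 - C (m : ℚ) * X ^ 2 - C ((m : ℚ) + 3) * X - 1

/-- The simplest cubic field `L_m`: the splitting field of `f_m` over `ℚ` inside a fixed
algebraic closure of `ℚ`. -/
noncomputable def L (m : ℤ) : IntermediateField ℚ (AlgebraicClosure ℚ) :=
  IntermediateField.adjoin ℚ ((f m).rootSet (AlgebraicClosure ℚ))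


lemma ch_succ (a : ℚ) (j : ℕ) : Ring.choose a (j+1) * (j+1) = Ring.choose a j * (a - j) := by
  have := Ring.choose_add_smul_choose (a - j) 1 j
  have h2 := Ring.choose_smul_choose a (n := j+1) (k := j) (by omega)
  simp [Nat.choose_succ_self_right] at h2
  linarith

lemma c_bound (r : ℕ) : ∀ j, j ≤ r → 0 ≤ Ring.choose ((r:ℚ) - 1/3) j ∧ Ring.choose ((r:ℚ) - 1/3) j ≤ (r.choose j : ℚ) := by
  intro j
  induction j with
  | zero => intro _; simp
  | succ j ih =>
    intro hj
    obtain ⟨h1, h2⟩ := ih (by omega)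
    have e := ch_succ ((r:ℚ) - 1/3) j
    have e2 : (r.choose (j+1) : ℚ) * (j+1) = r.choose j * (r - j) := by
      have := Nat.choose_succ_right_eq r j
      have h3 : ((r - j : ℕ) : ℚ) = r - j := by push_cast [show j ≤ r by omega]; ring
      rw [← h3]; exact_mod_cast this
    have hjr : (j:ℚ) + 1 ≤ r := by exact_mod_cast hj
    have hp : (0:ℚ) < j + 1 := by positivity
    constructor
    · by_contra hh
      push Not at hh
      nlinarith [mul_nonneg h1 (show (0:ℚ) ≤ (r:ℚ) - 1/3 - j by linarith)]
    · refine le_of_mul_le_mul_right ?_ hp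
      rw [e, e2]
      have : (0:ℚ) ≤ r.choose j := by positivity
      nlinarith

lemma c_bound2 (r : ℕ) (t : ℕ) : |Ring.choose ((r:ℚ) - 1/3) (r + t)| * ((r+t).choose r : ℚ) ≤ 1 := by
  induction t with
  | zero =>
    have := c_bound r r le_rfl
    simp only [add_zero, Nat.choose_self, Nat.cast_one, mul_one] at *
    rw [abs_of_nonneg this.1]; exact this.2
  | succ t ih =>
    have e := ch_succ ((r:ℚ) - 1/3) (r+t)
    have e2 : ((r+t+1).choose r : ℚ) * (t+1) = (r+t).choose r * (r+t+1) := by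
      have := Nat.choose_mul_succ_eq (r+t) r
      have h3 : r + t + 1 - r = t + 1 := by omega
      rw [h3] at this
      exact_mod_cast this.symm
    push_cast at e
    have e3 : |Ring.choose ((r:ℚ) - 1/3) (r+t+1)| * (r+t+1) = |Ring.choose ((r:ℚ) - 1/3) (r+t)| * (t+1/3) := by
      have := congrArg abs e
      rw [abs_mul, abs_mul, abs_of_nonneg (show (0:ℚ) ≤ r+t+1 by positivity)] at this
      have h4 : |(r:ℚ) - 1/3 - (r+t)| = t + 1/3 := by
        rw [← abs_neg, abs_of_nonneg (by linarith [show (0:ℚ) ≤ t by positivity])]; ring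
      rw [this, h4]
    have hp : (0:ℚ) < (t + 1) * (r+t+1) := by positivity
    refine le_of_mul_le_mul_right ?_ hp
    rw [← add_assoc]
    calc _ = (|Ring.choose ((r:ℚ) - 1/3) (r+t+1)| * (r+t+1)) * (((r+t+1).choose r : ℚ) * (t+1)) := by ring
      _ = (|Ring.choose ((r:ℚ) - 1/3) (r+t)| * ((r+t).choose r : ℚ)) * ((t+1/3) * (r+t+1)) := by rw [e3, e2]; ring
      _ ≤ 1 * ((t+1) * (r+t+1)) := by gcongr; norm_num

lemma b_bound (i : ℕ) : |Ring.choose (1/3:ℚ) i| ≤ 1 := by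
  induction i with
  | zero => simp
  | succ i ih =>
    have e := ch_succ (1/3:ℚ) i
    have := congrArg abs e
    rw [abs_mul, abs_mul, abs_of_nonneg (show (0:ℚ) ≤ i+1 by positivity)] at this
    have h2 : |(1/3:ℚ) - i| ≤ i + 1 := by
      rw [abs_le]; constructor <;> linarith [show (0:ℚ) ≤ i by positivity]
    have hp : (0:ℚ) < i+1 := by positivity
    refine le_of_mul_le_mul_right ?_ hp
    rw [this]
    gcongr

/-- the full (polynomially extended) convolution -/
lemma vand (r k : ℕ) :
    ∑ ij ∈ Finset.HasAntidiagonal.antidiagonal k, Ring.choose (1/3:ℚ) ij.1 * (Ring.choose ((r:ℚ)-1/3) ij.2 * Ring.choose (2*(r:ℚ) - ij.2) r)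
    = ∑ al ∈ Finset.HasAntidiagonal.antidiagonal r, Ring.choose (2*(r:ℚ) - k) al.1 * Ring.choose (1/3:ℚ) al.2 *
        (if al.2 ≤ k then Ring.choose ((r:ℚ) - al.2) (k - al.2) else 0) := by
  have key : ∀ l : ℕ, ∑ ij ∈ Finset.HasAntidiagonal.antidiagonal k, Ring.choose (1/3:ℚ) ij.1 * ((ij.1.choose l : ℕ) : ℚ) * Ring.choose ((r:ℚ)-1/3) ij.2
      = Ring.choose (1/3:ℚ) l * (if l ≤ k then Ring.choose ((r:ℚ) - l) (k - l) else 0) := by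
    intro l
    split_ifs with hl
    · obtain ⟨d, rfl⟩ := Nat.exists_eq_add_of_le hl
      have h1 : (r:ℚ) - l = (1/3 - l) + (r - 1/3) := by ring
      rw [Nat.add_sub_cancel_left, h1, Ring.add_choose_eq _ (Commute.all _ _), Finset.mul_sum]
      rw [Finset.Nat.sum_antidiagonal_eq_sum_range_succ_mk, Finset.Nat.sum_antidiagonal_eq_sum_range_succ_mk]
      rw [show (l + d).succ = l + (d+1) by omega, Finset.sum_range_add]
      rw [Finset.sum_eq_zero, zero_add]
      · apply Finset.sum_congr rfl
        intro i hi
        have := Ring.choose_add_smul_choose (1/3 : ℚ) i l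
        have h2 := Ring.choose_smul_choose (1/3:ℚ) (n := l + i) (k := l) (by omega)
        simp only [nsmul_eq_mul, Nat.add_sub_cancel_left] at h2
        have h3 : l + d - (l + i) = d - i := by omega
        simp only [h3]
        rw [← mul_assoc, ← h2]; ring
      · intro i hi
        simp at hi
        simp [Nat.choose_eq_zero_of_lt hi]
    · rw [mul_zero]
      apply Finset.sum_eq_zero
      intro ij hij
      simp at hij
      rw [Nat.choose_eq_zero_of_lt (by omega)]
      simp
  calc _ = ∑ ij ∈ Finset.HasAntidiagonal.antidiagonal k, ∑ al ∈ Finset.HasAntidiagonal.antidiagonal r, Ring.choose (2*(r:ℚ) - k) al.1 * (Ring.choose (1/3:ℚ) ij.1 * ((ij.1.choose al.2 : ℕ) : ℚ) * Ring.choose ((r:ℚ)-1/3) ij.2) := by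
        apply Finset.sum_congr rfl
        intro ij hij
        have : (k:ℚ) = ij.1 + ij.2 := by simp at hij; exact_mod_cast hij.symm
        rw [show 2*(r:ℚ) - ij.2 = (2*r - k) + ij.1 by rw [this]; ring, Ring.add_choose_eq _ (Commute.all _ _), Finset.mul_sum, Finset.mul_sum]
        apply Finset.sum_congr rfl
        intro al _
        rw [Ring.choose_natCast]; ring
    _ = _ := by
        rw [Finset.sum_comm]
        apply Finset.sum_congr rfl
        intro al _
        rw [← Finset.mul_sum, key]; ring

lemma vand_zero (r k : ℕ) (h : r < k) :
    ∑ ij ∈ Finset.HasAntidiagonal.antidiagonal k, Ring.choose (1/3:ℚ) ij.1 * (Ring.choose ((r:ℚ)-1/3) ij.2 * Ring.choose (2*(r:ℚ) - ij.2) r) = 0 := by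
  rw [vand]
  apply Finset.sum_eq_zero
  intro al hal
  simp at hal
  rw [if_pos (by omega), show (r:ℚ) - al.2 = ((r - al.2 : ℕ) : ℚ) by push_cast [show al.2 ≤ r by omega]; ring, Ring.choose_natCast,
    Nat.choose_eq_zero_of_lt (by omega)]
  simp

lemma vand_top (r : ℕ) :
    ∑ ij ∈ Finset.HasAntidiagonal.antidiagonal r, Ring.choose (1/3:ℚ) ij.1 * (Ring.choose ((r:ℚ)-1/3) ij.2 * Ring.choose (2*(r:ℚ) - ij.2) r)
      = Ring.choose ((r:ℚ) + 1/3) r := by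
  rw [vand, Ring.add_choose_eq _ (Commute.all _ _)]
  apply Finset.sum_congr rfl
  intro al hal
  simp at hal
  rw [if_pos (by omega), show (r:ℚ) - al.2 = ((r - al.2 : ℕ) : ℚ) by push_cast [show al.2 ≤ r by omega]; ring, Ring.choose_natCast,
    Nat.choose_self, show 2*(r:ℚ) - r = r by ring]
  simp

noncomputable def qc (r j : ℕ) : ℚ := if j ≤ r then Ring.choose ((r:ℚ)-1/3) j * ((2*r-j).choose r : ℚ) else 0

noncomputable def Sc (r k : ℕ) : ℚ := ∑ ij ∈ Finset.HasAntidiagonal.antidiagonal k, Ring.choose (1/3:ℚ) ij.1 * qc r ij.2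

lemma qc_eq (r j : ℕ) (h : j ≤ 2 * r) : qc r j = Ring.choose ((r:ℚ)-1/3) j * Ring.choose (2*(r:ℚ) - j) r := by
  rw [show 2*(r:ℚ) - j = ((2*r - j : ℕ) : ℚ) by push_cast [h]; ring, Ring.choose_natCast]
  unfold qc
  split_ifs with h1
  · rfl
  · rw [Nat.choose_eq_zero_of_lt (by omega)]; simp

lemma Sc_zero (r k : ℕ) (h1 : r < k) (h2 : k ≤ 2 * r) : Sc r k = 0 := by
  rw [← vand_zero r k h1]
  apply Finset.sum_congr rfl
  intro ij hij
  simp at hij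
  rw [qc_eq _ _ (by omega)]

lemma Sc_top (r : ℕ) : Sc r r = Ring.choose ((r:ℚ) + 1/3) r := by
  rw [← vand_top r]
  apply Finset.sum_congr rfl
  intro ij hij
  simp at hij
  rw [qc_eq _ _ (by omega)]

lemma tail_bound (r t : ℕ) : |Ring.choose ((r:ℚ)-1/3) (2*r+1+t) * Ring.choose (2*(r:ℚ) - (2*r+1+t : ℕ)) r| ≤ 1 := by
  have h1 := c_bound2 r (r+1+t)
  rw [show r + (r+1+t) = 2*r+1+t by ring] at h1
  rw [abs_mul]
  refine le_trans ?_ h1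
  gcongr
  rw [show 2*(r:ℚ) - (2*r+1+t : ℕ) = -((t + 1 : ℕ):ℚ) by push_cast; ring, Ring.choose_neg]
  have : ((t+1 : ℕ):ℚ) + r - 1 = ((t + r : ℕ):ℚ) := by push_cast; ring
  rw [this, Ring.choose_natCast]
  have h3 : ((t+r).choose r : ℚ) ≤ ((2*r+1+t).choose r : ℚ) := by
    exact_mod_cast Nat.choose_le_choose r (by omega)
  rcases Int.units_eq_one_or (Int.negOnePow r) with h | h <;> simp [h, Units.smul_def] <;> exact_mod_cast h3

lemma Sc_bound (r d : ℕ) : |Sc r (2*r+1+d)| ≤ d + 1 := by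
  have h0 := vand_zero r (2*r+1+d) (by omega)
  have h1 : Sc r (2*r+1+d) = - ∑ ij ∈ Finset.HasAntidiagonal.antidiagonal (2*r+1+d), if 2*r+1 ≤ ij.2 then
     Ring.choose (1/3:ℚ) ij.1 * (Ring.choose ((r:ℚ)-1/3) ij.2 * Ring.choose (2*(r:ℚ) - ij.2) r) else 0 := by
    rw [eq_neg_iff_add_eq_zero]
    refine Eq.trans ?_ h0
    rw [Sc, ← Finset.sum_add_distrib]
    apply Finset.sum_congr rfl
    intro ij hij
    split_ifs with h
    · rw [qc, if_neg (by omega)]; simp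
    · rw [qc_eq _ _ (by omega)]; simp
  rw [h1, abs_neg]
  refine (Finset.abs_sum_le_sum_abs _ _).trans ?_
  have h2 : ∀ ij ∈ Finset.HasAntidiagonal.antidiagonal (2*r+1+d), |if 2*r+1 ≤ ij.2 then
     Ring.choose (1/3:ℚ) ij.1 * (Ring.choose ((r:ℚ)-1/3) ij.2 * Ring.choose (2*(r:ℚ) - ij.2) r) else 0|
      ≤ if 2*r+1 ≤ ij.2 then (1:ℚ) else 0 := by
    intro ij hij
    split_ifs with h
    · obtain ⟨t, ht⟩ := Nat.exists_eq_add_of_le h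
      rw [ht, abs_mul]
      exact mul_le_one₀ (b_bound _) (abs_nonneg _) (tail_bound r t)
    · simp
  refine (Finset.sum_le_sum h2).trans ?_
  rw [Finset.Nat.sum_antidiagonal_eq_sum_range_succ_mk, Finset.sum_ite]
  simp only [Finset.sum_const, nsmul_eq_mul, mul_one, mul_zero, add_zero]
  have h3 : (Finset.filter (fun x => 2*r+1 ≤ 2*r+1+d - x) (Finset.range (2*r+1+d).succ)) ⊆ Finset.range (d+1) := by
    intro x hx
    simp at hx ⊢
    omega
  have := Finset.card_le_card h3
  rw [Finset.card_range] at this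
  exact_mod_cast this

/-- product form -/
lemma ch_prod (a : ℤ) (k : ℕ) : (3:ℚ)^k * k.factorial * Ring.choose ((a:ℚ)/3) k = ∏ i ∈ Finset.range k, ((a:ℚ) - 3 * i) := by
  induction k with
  | zero => simp
  | succ k ih =>
    rw [Finset.prod_range_succ, ← ih, Nat.factorial_succ]
    have e := ch_succ ((a:ℚ)/3) k
    push_cast
    linear_combination (3:ℚ)^(k+1) * k.factorial * e

lemma fact_dvd_int (t : ℤ) (k : ℕ) : (k.factorial : ℤ) ∣ ∏ i ∈ Finset.range k, (t - i) := by
  refine ⟨Ring.choose t k, ?_⟩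
  have h1 : (∏ i ∈ Finset.range k, (t - i)) = (descPochhammer ℤ k).eval t := by
    rw [descPochhammer_eval_eq_prod_range]
  have h2 := Ring.descPochhammer_eq_factorial_smul_choose t k
  rw [h1, ← Polynomial.eval_eq_smeval] at *
  rw [h2]; simp

lemma ch_int (a : ℤ) (k : ℕ) : ∃ z : ℤ, (3:ℚ)^(3*k/2) * Ring.choose ((a:ℚ)/3) k = z := by
  obtain ⟨v, u, hu, hk⟩ := Nat.exists_eq_pow_mul_and_not_dvd (Nat.factorial_ne_zero k) 3 (by norm_num)
  have hv : v ≤ k / 2 := by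
    have : Fact (Nat.Prime 3) := ⟨by norm_num⟩
    have h1 := sub_one_mul_padicValNat_factorial (p := 3) k
    have h2 : padicValNat 3 k.factorial = v := by
      rw [hk, padicValNat.mul (by positivity) (by rintro rfl; simp at hu), padicValNat.prime_pow, padicValNat.eq_zero_of_not_dvd hu]; simp
    rw [h2] at h1
    omega
  have hcop : IsCoprime (3:ℤ) (u:ℤ) := by
    rw [show (3:ℤ) = ((3:ℕ):ℤ) by norm_num, Nat.isCoprime_iff_coprime]
    exact (Nat.Prime.coprime_iff_not_dvd (by norm_num)).2 hu
  obtain ⟨x, y, hxy⟩ := hcop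
  have hdvd : (u:ℤ) ∣ ∏ i ∈ Finset.range k, (a - 3 * i) := by
    have h1 : (∏ i ∈ Finset.range k, (a - 3 * (i:ℤ))) ≡ ∏ i ∈ Finset.range k, (3 * (x * a - i)) [ZMOD u] := by
      have : ∀ i ∈ Finset.range k, (a - 3 * (i:ℤ)) ≡ (3 * (x * a - i)) [ZMOD u] := by
        intro i _
        apply Int.ModEq.symm
        rw [Int.modEq_iff_dvd]
        exact ⟨y * a, by linear_combination (-a) * hxy⟩
      exact Int.ModEq.prod this
    rw [← Int.modEq_zero_iff_dvd]
    refine h1.trans ?_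
    rw [Int.modEq_zero_iff_dvd, Finset.prod_mul_distrib]
    apply Dvd.dvd.mul_left
    refine Dvd.dvd.trans ?_ (fact_dvd_int (x*a) k)
    rw [hk]; push_cast; exact Dvd.intro_left _ rfl
  obtain ⟨w, hw⟩ := hdvd
  refine ⟨3^(3*k/2 - k - v) * w, ?_⟩
  have e := ch_prod a k
  have hw' : (∏ i ∈ Finset.range k, ((a:ℚ) - 3 * i)) = u * w := by exact_mod_cast hw
  rw [hw', hk] at e
  have hu0 : (u:ℚ) ≠ 0 := by
    rintro h
    have : u = 0 := by exact_mod_cast h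
    subst this; simp at hu
  push_cast at e ⊢
  obtain ⟨d, hd⟩ := Nat.exists_eq_add_of_le (show k + v ≤ 3*k/2 by omega)
  rw [hd, show k + v + d - k - v = d by omega]
  apply mul_left_cancel₀ hu0
  rw [pow_add, pow_add]
  linear_combination (3:ℚ)^d * e

noncomputable def om : ℂ := ⟨-1/2, Real.sqrt 3 / 2⟩

lemma om_sq : om^2 = -1 - om := by
  have : Real.sqrt 3 * Real.sqrt 3 = 3 := Real.mul_self_sqrt (by norm_num)
  apply Complex.ext <;> simp [om, pow_two] <;> linarith

lemma om_conj : (starRingEnd ℂ) om = -1 - om := by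
  apply Complex.ext <;> simp [om]; norm_num

/-- The ring of Eisenstein integers in `ℂ`. -/
noncomputable def Eis : Subring ℂ where
  carrier := {z | ∃ a b : ℤ, z = a + b * om}
  mul_mem' := by
    rintro _ _ ⟨a, b, rfl⟩ ⟨c, d, rfl⟩
    refine ⟨a*c - b*d, a*d+b*c-b*d, ?_⟩
    push_cast
    linear_combination (b:ℂ)*d*om_sq
  one_mem' := ⟨1, 0, by simp⟩
  add_mem' := by
    rintro _ _ ⟨a, b, rfl⟩ ⟨c, d, rfl⟩
    exact ⟨a+c, b+d, by push_cast; ring⟩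
  zero_mem' := ⟨0, 0, by simp⟩
  neg_mem' := by
    rintro _ ⟨a, b, rfl⟩
    exact ⟨-a, -b, by push_cast; ring⟩

lemma om_mem : om ∈ Eis := ⟨0, 1, by simp⟩
lemma int_mem (a : ℤ) : (a:ℂ) ∈ Eis := ⟨a, 0, by simp⟩

lemma Eis_conj {z : ℂ} (h : z ∈ Eis) : (starRingEnd ℂ) z ∈ Eis := by
  obtain ⟨a, b, rfl⟩ := h
  refine ⟨a - b, -b, ?_⟩
  simp [om_conj]; ring

lemma Eis_normSq (a b : ℤ) : Complex.normSq (a + b * om) = ((a^2 - a*b + b^2 : ℤ) : ℝ) := by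
  have : Real.sqrt 3 * Real.sqrt 3 = 3 := Real.mul_self_sqrt (by norm_num)
  simp [Complex.normSq_apply, om]
  linear_combination (b:ℝ)^2/4 * this

lemma Eis_norm {z : ℂ} (h : z ∈ Eis) (h0 : z ≠ 0) : 1 ≤ ‖z‖ := by
  obtain ⟨a, b, rfl⟩ := h
  have h1 := Eis_normSq a b
  have h2 : 0 < Complex.normSq (a + b * om) := Complex.normSq_pos.2 h0
  rw [h1] at h2
  have h3 : 1 ≤ (a^2 - a*b + b^2 : ℤ) := by exact_mod_cast h2
  have h4 : (1:ℝ) ≤ ((a^2 - a*b + b^2 : ℤ) : ℝ) := by exact_mod_cast h3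
  rw [← h1, Complex.normSq_eq_norm_sq] at h4
  nlinarith [norm_nonneg ((a:ℂ) + b * om)]

noncomputable def sq3 : ℂ := 2 * om + 1
lemma sq3_sq : sq3^2 = -3 := by unfold sq3; linear_combination 4 * om_sq
lemma sq3_mem : sq3 ∈ Eis := ⟨1, 2, by unfold sq3; push_cast; ring⟩
lemma sq3_norm : ‖sq3‖^2 = 3 := by
  have := congrArg norm sq3_sq
  rw [norm_pow] at this; rw [this]; simp

lemma ch_mem (a : ℤ) (k : ℕ) : sq3^(3*k) * ((Ring.choose ((a:ℚ)/3) k : ℚ) : ℂ) ∈ Eis := by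
  obtain ⟨z, hz⟩ := ch_int a k
  have h1 : sq3^(3*k) = sq3^(3*k%2) * ((-1)^(3*k/2) * 3^(3*k/2)) := by
    rw [← mul_pow, show (-1:ℂ)*3 = sq3^2 by rw [sq3_sq]; norm_num, ← pow_mul, ← pow_add]
    congr 1; omega
  have h2 : (3:ℂ)^(3*k/2) * ((Ring.choose ((a:ℚ)/3) k : ℚ) : ℂ) = z := by exact_mod_cast congrArg (fun x : ℚ => (x:ℂ)) hz
  rw [h1, show sq3^(3*k%2) * ((-1)^(3*k/2) * 3^(3*k/2)) * ((Ring.choose ((a:ℚ)/3) k : ℚ) : ℂ) = sq3^(3*k%2) * (-1)^(3*k/2) * ((3:ℂ)^(3*k/2) * ((Ring.choose ((a:ℚ)/3) k : ℚ) : ℂ)) by ring, h2]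
  exact Eis.mul_mem (Eis.mul_mem (Eis.pow_mem sq3_mem _) (Eis.pow_mem (Eis.neg_mem Eis.one_mem) _)) (int_mem z)

lemma qc_mem (r j : ℕ) : sq3^(3*j) * ((qc r j : ℚ) : ℂ) ∈ Eis := by
  unfold qc
  split_ifs with h
  · have := ch_mem (3 * r - 1) j
    rw [show (((3 * (r:ℤ) - 1 : ℤ) : ℚ) / 3) = (r:ℚ) - 1/3 by push_cast; ring] at this
    have h2 := Eis.mul_mem this (int_mem ((2*r-j).choose r))
    push_cast at h2 ⊢
    rw [← mul_assoc]
    convert h2 using 2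
  · simp [Eis.zero_mem]

lemma Sc_mem (r k : ℕ) : sq3^(3*k) * ((Sc r k : ℚ) : ℂ) ∈ Eis := by
  unfold Sc
  push_cast
  rw [Finset.mul_sum]
  apply Eis.sum_mem
  intro ij hij
  replace hij : ij.1 + ij.2 = k := by simpa using hij
  have h1 := ch_mem 1 ij.1
  have h2 := Eis.mul_mem h1 (qc_mem r ij.2)
  convert h2 using 1
  rw [← hij, mul_add, pow_add]
  push_cast
  ring

noncomputable def Qp (r : ℕ) : ℚ[X] := ∑ j ∈ Finset.range (r+1), monomial j (qc r j)
noncomputable def Pp (r : ℕ) : ℚ[X] := ∑ j ∈ Finset.range (r+1), monomial j (Sc r j)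

lemma Qp_coeff (r k : ℕ) : (Qp r).coeff k = qc r k := by
  simp only [Qp, finsetSum_coeff, coeff_monomial, Finset.sum_ite_eq', Finset.mem_range]
  split_ifs with h
  · rfl
  · rw [qc, if_neg (by omega)]

lemma Pp_coeff (r k : ℕ) : (Pp r).coeff k = if k ≤ r then Sc r k else 0 := by
  simp only [Pp, finsetSum_coeff, coeff_monomial, Finset.sum_ite_eq', Finset.mem_range, Nat.lt_succ_iff]

lemma Qp_deg (r : ℕ) : (Qp r).natDegree ≤ r := by
  rw [natDegree_le_iff_coeff_eq_zero]
  intro k hk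
  rw [Qp_coeff, qc, if_neg (by omega)]

lemma Pp_deg (r : ℕ) : (Pp r).natDegree ≤ r := by
  rw [natDegree_le_iff_coeff_eq_zero]
  intro k hk
  rw [Pp_coeff, if_neg (by omega)]

lemma rem_dvd (r : ℕ) : (PowerSeries.X : PowerSeries ℚ)^(2*r+1) ∣
    PowerSeries.mk (fun k => Ring.choose (1/3:ℚ) k) * (Qp r : PowerSeries ℚ) - (Pp r : PowerSeries ℚ) := by
  rw [PowerSeries.X_pow_dvd_iff]
  intro k hk
  rw [map_sub, PowerSeries.coeff_mul]
  simp only [PowerSeries.coeff_mk, Polynomial.coeff_coe, Qp_coeff, Pp_coeff]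
  change Sc r k - _ = 0
  split_ifs with h
  · ring
  · rw [Sc_zero r k (by omega) (by omega)]; ring

lemma absorb (a : ℚ) (k : ℕ) : (k+1) * Ring.choose (a+1) (k+1) = (a+1) * Ring.choose a k := by
  have h2 := Ring.choose_smul_choose (a+1) (n := k+1) (k := 1) (by omega)
  simpa using h2

lemma A_pos (e : ℚ) (he : -1 < e) (r : ℕ) : 0 < Ring.choose ((r:ℚ) + e) r := by
  induction r with
  | zero => simp
  | succ r ih =>
    have := absorb ((r:ℚ) + e) r
    have h1 : 0 < ((r:ℚ) + e + 1) * Ring.choose ((r:ℚ)+e) r := by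
      apply mul_pos _ ih
      linarith [show (0:ℚ) ≤ r by positivity]
    rw [← this] at h1
    rw [show ((r+1:ℕ):ℚ) + e = (r:ℚ) + e + 1 by push_cast; ring]
    exact pos_of_mul_pos_right h1 (by positivity)

lemma det_eq (r : ℕ) : ∃ c : ℚ, c ≠ 0 ∧ Pp r * Qp (r+1) - Pp (r+1) * Qp r = C c * X^(2*r+1) := by
  refine ⟨Sc r r * qc (r+1) (r+1) - Sc (r+1) (r+1) * qc r r, ?_, ?_⟩
  · rw [Sc_top, Sc_top, qc, qc, if_pos le_rfl, if_pos le_rfl]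
    rw [show 2*(r+1)-(r+1) = r+1 by omega, show 2*r - r = r by omega]
    simp only [Nat.choose_self, Nat.cast_one, mul_one]
    have h1 := A_pos (1/3) (by norm_num) r
    have h2 := A_pos (-(1/3)) (by norm_num) r
    have h3 := absorb ((r:ℚ)+1/3) r
    have h4 := absorb ((r:ℚ)+ -(1/3)) r
    rw [show ((r+1:ℕ):ℚ) - 1/3 = (r:ℚ) + -(1/3) + 1 by push_cast; ring, show (r:ℚ) - 1/3 = r + -(1/3) by ring,
      show ((r+1:ℕ):ℚ) + 1/3 = (r:ℚ) + (1/3) + 1 by push_cast; ring]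
    intro h
    have h5 : (0:ℚ) < Ring.choose ((r:ℚ)+1/3) r * Ring.choose ((r:ℚ)+ -(1/3)) r := mul_pos h1 h2
    have : (2/3:ℚ) * (Ring.choose ((r:ℚ)+1/3) r * Ring.choose ((r:ℚ)+ -(1/3)) r) = 0 := by
      linear_combination (-(r:ℚ) - 1) * h + Ring.choose ((r:ℚ)+1/3) r * h4 - Ring.choose ((r:ℚ)+ -(1/3)) r * h3
    linarith
  · ext k
    rw [coeff_C_mul, coeff_X_pow]
    rcases lt_trichotomy k (2*r+1) with h | h | h
    · rw [if_neg (by omega), mul_zero]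
      have h1 : (PowerSeries.X : PowerSeries ℚ)^(2*r+1) ∣ ((Pp r * Qp (r+1) - Pp (r+1) * Qp r : ℚ[X]) : PowerSeries ℚ) := by
        have d1 := rem_dvd r
        have d2 := (pow_dvd_pow (PowerSeries.X : PowerSeries ℚ) (show 2*r+1 ≤ 2*(r+1)+1 by omega)).trans (rem_dvd (r+1))
        have := dvd_sub (d2.mul_right (Qp r : PowerSeries ℚ)) (d1.mul_right (Qp (r+1) : PowerSeries ℚ))
        convert this using 1
        push_cast
        ring
      rw [PowerSeries.X_pow_dvd_iff] at h1
      have := h1 k h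
      rwa [Polynomial.coeff_coe] at this
    · subst h
      rw [if_pos rfl, mul_one, coeff_sub]
      have e1 := coeff_mul_add_eq_of_natDegree_le (Pp_deg r) (Qp_deg (r+1))
      have e2 := coeff_mul_add_eq_of_natDegree_le (Pp_deg (r+1)) (Qp_deg r)
      rw [show r + (r+1) = 2*r+1 by ring] at e1
      rw [show (r+1) + r = 2*r+1 by ring] at e2
      rw [e1, e2, Pp_coeff, Pp_coeff, Qp_coeff, Qp_coeff, if_pos le_rfl, if_pos le_rfl]
    · rw [if_neg (by omega), mul_zero, coeff_sub]
      rw [coeff_eq_zero_of_natDegree_lt, coeff_eq_zero_of_natDegree_lt, sub_zero]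
      · refine lt_of_le_of_lt natDegree_mul_le ?_
        have := Pp_deg (r+1); have := Qp_deg r; omega
      · refine lt_of_le_of_lt natDegree_mul_le ?_
        have := Pp_deg r; have := Qp_deg (r+1); omega

lemma aeval_Qp (r : ℕ) (x : ℂ) : aeval x (Qp r) = ∑ j ∈ Finset.range (r+1), ((qc r j : ℚ):ℂ) * x^j := by
  simp [Qp, aeval_monomial]
lemma aeval_Pp (r : ℕ) (x : ℂ) : aeval x (Pp r) = ∑ j ∈ Finset.range (r+1), ((Sc r j : ℚ):ℂ) * x^j := by
  simp [Pp, aeval_monomial]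

lemma binom_hasSum (x : ℂ) (hx : ‖x‖ < 1) :
    HasSum (fun k => ((Ring.choose (1/3:ℚ) k : ℚ) : ℂ) * x^k) ((1+x)^(1/3:ℂ)) := by
  have h := (Complex.one_add_cpow_hasFPowerSeriesOnBall_zero (a := (1/3:ℂ))).hasSum (y := x) (by simpa [enorm_eq_nnnorm, ← NNReal.coe_lt_coe] using hx)
  simp only [binomialSeries_apply, zero_add, List.ofFn_const, List.prod_replicate, smul_eq_mul] at h
  have e : (fun k => ((Ring.choose (1/3:ℚ) k : ℚ) : ℂ) * x^k) = fun k => Ring.choose (1/3:ℂ) k * x^k := by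
    funext k
    have := Ring.map_choose (algebraMap ℚ ℂ) (1/3) k
    simp only [eq_ratCast] at this
    rw [this]; norm_num
  rw [e]
  exact h

lemma rem_bound (r : ℕ) (x : ℂ) (hx : ‖x‖ ≤ 1/4) :
    ‖(1+x)^(1/3:ℂ) * aeval x (Qp r) - aeval x (Pp r)‖ ≤ 2 * ‖x‖^(2*r+1) := by
  have hb := binom_hasSum x (by linarith)
  have hbn : Summable (fun k => ‖((Ring.choose (1/3:ℚ) k : ℚ) : ℂ) * x^k‖) := by
    refine Summable.of_nonneg_of_le (fun _ => norm_nonneg _) (fun k => ?_) (summable_geometric_of_lt_one (norm_nonneg x) (by linarith))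
    rw [norm_mul, norm_pow]
    have : ‖((Ring.choose (1/3:ℚ) k : ℚ) : ℂ)‖ ≤ 1 := by
      have h1 := b_bound k
      have h2 : ‖((Ring.choose (1/3:ℚ) k : ℚ) : ℂ)‖ = ((|Ring.choose (1/3:ℚ) k| : ℚ) : ℝ) := by
        rw [Complex.norm_ratCast]; push_cast; rfl
      rw [h2]; exact_mod_cast h1
    exact mul_le_of_le_one_left (by positivity) this
  have hq : HasSum (fun k => ((qc r k : ℚ) : ℂ) * x^k) (aeval x (Qp r)) := by
    rw [aeval_Qp]
    apply hasSum_sum_of_ne_finset_zero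
    intro k hk
    simp at hk
    rw [qc, if_neg (by omega)]; simp
  have hqn : Summable (fun k => ‖((qc r k : ℚ) : ℂ) * x^k‖) := by
    apply summable_of_ne_finset_zero (s := Finset.range (r+1))
    intro k hk
    simp at hk
    rw [qc, if_neg (by omega)]; simp
  have hp : HasSum (fun k => if k ≤ r then ((Sc r k : ℚ) : ℂ) * x^k else 0) (aeval x (Pp r)) := by
    rw [aeval_Pp]
    have := hasSum_sum_of_ne_finset_zero (L := SummationFilter.unconditional ℕ) (f := fun k => if k ≤ r then ((Sc r k : ℚ) : ℂ) * x^k else 0) (s := Finset.range (r+1)) (by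
      intro k hk
      simp at hk
      rw [if_neg (by omega)])
    convert this using 1
    apply Finset.sum_congr rfl
    intro k hk
    simp at hk
    rw [if_pos (by omega)]
  have hS : HasSum (fun k => ((Sc r k : ℚ) : ℂ) * x^k) ((1+x)^(1/3:ℂ) * aeval x (Qp r)) := by
    have h1 := tsum_mul_tsum_eq_tsum_sum_antidiagonal_of_summable_norm hbn hqn
    have h2 := (summable_norm_sum_mul_antidiagonal_of_summable_norm hbn hqn).of_norm
    rw [hb.tsum_eq, hq.tsum_eq] at h1
    rw [h1]
    refine Eq.mp ?_ h2.hasSum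
    congr 1
    funext k
    unfold Sc
    push_cast
    symm
    rw [Finset.sum_mul]
    apply Finset.sum_congr rfl
    intro ij hij
    replace hij : ij.1 + ij.2 = k := by simpa using hij
    rw [← hij, pow_add]; ring
  have hd := hS.sub hp
  rw [← hasSum_nat_add_iff' (2*r+1)] at hd
  rw [Finset.sum_eq_zero, sub_zero] at hd
  · have hg : HasSum (fun d : ℕ => ‖x‖^(2*r+1) * (1/2:ℝ)^d) (‖x‖^(2*r+1) * 2) := hasSum_geometric_two.mul_left _
    rw [mul_comm 2, ← hd.tsum_eq]
    refine tsum_of_norm_bounded hg ?_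
    intro d
    rw [if_neg (by omega), sub_zero, norm_mul, norm_pow, pow_add, mul_comm, mul_comm (‖x‖^d), mul_assoc]
    gcongr
    have h1 := Sc_bound r d
    rw [show 2*r+1+d = d + (2*r+1) by ring] at h1
    have h2 : ‖((Sc r (d + (2*r+1)) : ℚ) : ℂ)‖ = ((|Sc r (d + (2*r+1))| : ℚ) : ℝ) := by
      rw [Complex.norm_ratCast]; push_cast; rfl
    have h3 : (d:ℚ) + 1 ≤ 2^d := by exact_mod_cast Nat.lt_two_pow_self
    have h4 : ((|Sc r (d + (2*r+1))| : ℚ) : ℝ) ≤ 2^d := by exact_mod_cast h1.trans h3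
    calc ‖x‖^d * ‖((Sc r (d + (2*r+1)) : ℚ) : ℂ)‖ ≤ (1/4)^d * 2^d := by
          rw [h2]; gcongr
      _ = (1/2)^d := by rw [← mul_pow]; norm_num
  · intro k hk
    simp at hk
    split_ifs with h
    · ring
    · rw [Sc_zero r k (by omega) (by omega)]; simp

lemma hom_mem (r : ℕ) (g : ℕ → ℚ) (hg : ∀ j, sq3^(3*j) * ((g j : ℚ) : ℂ) ∈ Eis) (t : ℂ) (ht : t ∈ Eis) (ht0 : t ≠ 0) :
    t^r * ∑ j ∈ Finset.range (r+1), ((g j : ℚ):ℂ) * (sq3^3/t)^j ∈ Eis := by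
  rw [Finset.mul_sum]
  apply Eis.sum_mem
  intro j hj
  simp at hj
  have h1 := Eis.mul_mem (hg j) (Eis.pow_mem ht (r - j))
  convert h1 using 1
  rw [div_pow, ← pow_mul]
  have : t^r = t^(r-j) * t^j := by rw [← pow_add]; congr 1; omega
  rw [this]
  field_simp

lemma Q_bound (r : ℕ) (t : ℂ) (ht0 : t ≠ 0) :
    ‖t^r * aeval (sq3^3/t) (Qp r)‖ ≤ (4 * (‖t‖ + 6))^r := by
  have hs : ‖sq3‖^3 ≤ 6 := by
    have := sq3_norm
    nlinarith [norm_nonneg sq3, sq_nonneg (‖sq3‖ - 2)]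
  rw [aeval_Qp, Finset.mul_sum]
  refine (norm_sum_le _ _).trans ?_
  have h1 : ∀ j ∈ Finset.range (r+1), ‖t^r * (((qc r j : ℚ):ℂ) * (sq3^3/t)^j)‖ ≤ 4^r * (6^j * ‖t‖^(r-j) * (r.choose j : ℝ)) := by
    intro j hj
    simp at hj
    have e : t^r * (((qc r j : ℚ):ℂ) * (sq3^3/t)^j) = ((qc r j : ℚ):ℂ) * ((sq3^3)^j * t^(r-j)) := by
      have : t^r = t^(r-j) * t^j := by rw [← pow_add]; congr 1; omega
      rw [this, div_pow]
      field_simp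
    have hq : 0 ≤ qc r j ∧ qc r j ≤ (r.choose j : ℚ) * 4^r := by
      have hb := c_bound r j (by omega)
      rw [qc, if_pos (by omega)]
      refine ⟨mul_nonneg hb.1 (by positivity), ?_⟩
      have h4 : (((2*r-j).choose r : ℕ) : ℚ) ≤ 4^r := by
        have a1 : (2*r-j).choose r ≤ (2*r).choose r := Nat.choose_le_choose r (by omega)
        have a2 : (2*r).choose r ≤ 2^(2*r) := Nat.choose_le_two_pow _ _
        rw [pow_mul] at a2
        exact_mod_cast a1.trans a2
      exact mul_le_mul hb.2 h4 (by positivity) (by positivity)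
    have hq2 : ‖((qc r j : ℚ) : ℂ)‖ ≤ (r.choose j : ℝ) * 4^r := by
      rw [Complex.norm_ratCast, abs_of_nonneg (by exact_mod_cast hq.1)]
      exact_mod_cast hq.2
    rw [e, norm_mul, norm_mul, norm_pow, norm_pow, norm_pow]
    calc _ ≤ ((r.choose j : ℝ) * 4^r) * (6^j * ‖t‖^(r-j)) := by gcongr
      _ = _ := by ring
  refine (Finset.sum_le_sum h1).trans ?_
  rw [← Finset.mul_sum, ← add_pow, mul_pow, add_comm]

lemma pade_step (t D E : ℂ) (ht : t ∈ Eis) (hD : D ∈ Eis) (hE : E ∈ Eis) (hM : 35733 ≤ ‖t‖)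
    (B N : ℝ) (hEB : ‖E‖ = B) (hN : 0 < N)
    (happ : ‖(1 + sq3^3/t)^(1/3:ℂ) * E - D‖ ≤ 2 * B / N) (r : ℕ)
    (c1 : 4 * B * (27/‖t‖)^r < 1) (c2 : 4 * B * (4 * (‖t‖ + 6))^r < N) :
    aeval (sq3^3/t) (Pp r) * E = aeval (sq3^3/t) (Qp r) * D := by
  have ht0 : t ≠ 0 := by rintro rfl; simp at hM; linarith
  by_contra hne
  set x := sq3^3/t with hx
  set y := (1+x)^(1/3:ℂ)
  have hB : 0 ≤ B := hEB ▸ norm_nonneg _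
  have hs : ‖sq3‖^3 ≤ 6 := by
    have := sq3_norm
    nlinarith [norm_nonneg sq3, sq_nonneg (‖sq3‖ - 2)]
  have htp : 0 < ‖t‖ := by linarith
  have hxn : ‖x‖ ≤ 1/4 := by
    rw [hx, norm_div, norm_pow, div_le_iff₀ htp]; linarith
  have hx2 : ‖x‖^2 * ‖t‖ = 27/‖t‖ := by
    rw [hx, norm_div, norm_pow, div_pow, ← pow_mul]
    rw [show ‖sq3‖^(3*2) = (‖sq3‖^2)^3 by ring, sq3_norm]
    field_simp; norm_num
  have hmem : t^r * aeval x (Pp r) * E - t^r * aeval x (Qp r) * D ∈ Eis := by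
    apply Eis.sub_mem
    · apply Eis.mul_mem _ hE
      rw [aeval_Pp]; exact hom_mem r _ (Sc_mem r) t ht ht0
    · apply Eis.mul_mem _ hD
      rw [aeval_Qp]; exact hom_mem r _ (qc_mem r) t ht ht0
  have h1 := Eis_norm hmem (by
    rw [mul_assoc, mul_assoc, ← mul_sub]
    exact mul_ne_zero (pow_ne_zero _ ht0) (sub_ne_zero.2 hne))
  have e : t^r * aeval x (Pp r) * E - t^r * aeval x (Qp r) * D
     = (t^r * aeval x (Qp r)) * (y * E - D) - t^r * (y * aeval x (Qp r) - aeval x (Pp r)) * E := by ring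
  rw [e] at h1
  have h2 := (h1.trans (norm_sub_le _ _))
  rw [norm_mul, norm_mul (t^r * _) E, norm_mul (t^r) (y * _ - _), hEB, norm_pow] at h2
  have h3 := Q_bound r t ht0
  have h4 := rem_bound r x hxn
  have h5 : ‖t‖^r * ‖y * aeval x (Qp r) - aeval x (Pp r)‖ * B ≤ 1/2 * (B * (27/‖t‖)^r) := by
    calc _ ≤ ‖t‖^r * (2 * ‖x‖^(2*r+1)) * B := by gcongr
      _ = 2 * ‖x‖ * (B * (‖x‖^2 * ‖t‖)^r) := by ring
      _ ≤ _ := by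
        rw [hx2]
        gcongr
        linarith
  have h6 : ‖t^r * aeval x (Qp r)‖ * ‖y * E - D‖ ≤ (4 * (‖t‖+6))^r * (2 * B / N) := by gcongr
  have h7 : (4 * (‖t‖+6))^r * (2 * B / N) < 1/2 := by
    rw [← mul_div_assoc, div_lt_iff₀ hN]; linarith
  linarith

lemma pade_contra (t D E : ℂ) (ht : t ∈ Eis) (hD : D ∈ Eis) (hE : E ∈ Eis) (hM : 35733 ≤ ‖t‖)
    (B N : ℝ) (hB : 0 < B) (hEB : ‖E‖ = B) 
    (happ : ‖(1 + sq3^3/t)^(1/3:ℂ) * E - D‖ ≤ 2 * B / N)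
    (hB3 : B^3 ≤ 16 * ‖t‖ * N) (hNbig : (‖t‖/27)^54 < N) : False := by
  set M := ‖t‖ with hMdef
  set A := M/27 with hA
  have hA1 : 1323 ≤ A := by rw [hA]; linarith
  have hMA : M = 27 * A := by rw [hA]; ring
  have hA0 : 0 < A := by linarith
  have hN : 0 < N := lt_trans (by positivity) hNbig
  obtain ⟨r, hr1, hr2⟩ : ∃ r, 1024 * M * N < A^(3*(r+1)) ∧ A^(3*r) ≤ 1024 * M * N := by
    have hex : ∃ r, 1024 * M * N < A^(3*r) := by
      obtain ⟨k, hk⟩ := pow_unbounded_of_one_lt (1024 * M * N) (show 1 < A by linarith)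
      exact ⟨k, hk.trans_le (pow_le_pow_right₀ (by linarith) (by omega))⟩
    classical
    have hs := Nat.find_spec hex
    have hm := fun k => Nat.find_min hex (m := k)
    rcases hr : Nat.find hex with _ | r
    · exfalso
      rw [hr] at hs
      have : (1:ℝ) ≤ A^54 := one_le_pow₀ (by linarith)
      simp at hs
      nlinarith
    · rw [hr] at hs hm
      exact ⟨r, hs, not_lt.1 (hm r (by omega))⟩
  have c1 : ∀ k, r + 1 ≤ k → 4 * B * (27/M)^k < 1 := by
    intro k hk
    have e : 27/M = A⁻¹ := by rw [hA, inv_div]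
    rw [e, inv_pow, ← div_eq_mul_inv, div_lt_one (by positivity)]
    have h1 : (4*B)^3 < (A^k)^3 := by
      calc (4*B)^3 = 64 * B^3 := by ring
        _ ≤ 64 * (16 * M * N) := by gcongr
        _ = 1024 * M * N := by ring
        _ < A^(3*(r+1)) := hr1
        _ ≤ A^(3*k) := pow_le_pow_right₀ (by linarith) (by omega)
        _ = (A^k)^3 := by rw [← pow_mul]; ring_nf
    exact lt_of_pow_lt_pow_left₀ 3 (by positivity) h1
  have hG : 1024 * M ≤ A^3 := by
    have a1 : 27648 ≤ A^2 := by nlinarith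
    rw [hMA]
    nlinarith [mul_le_mul_of_nonneg_right a1 hA0.le]
  have h4M : (4 * (M+6))^3 ≤ A^5 := by
    have a1 : 4 * (M + 6) ≤ 109 * A := by rw [hMA]; linarith
    calc (4*(M+6))^3 ≤ (109*A)^3 := by gcongr
      _ = 1295029 * A^3 := by ring
      _ ≤ A^2 * A^3 := by gcongr; nlinarith
      _ = A^5 := by ring
  have hMp : 0 < M := by linarith
  have c2 : ∀ k, k ≤ r + 2 → 4 * B * (4 * (M+6))^k < N := by
    intro k hk
    have h1 : (4 * B * (4 * (M+6))^k)^3 < N^3 := by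
      have b1 : (4 * B * (4 * (M+6))^k)^3 ≤ A^3 * N * A^(5*(r+2)) := by
        calc (4 * B * (4 * (M+6))^k)^3 = 64 * B^3 * ((4*(M+6))^3)^k := by rw [← pow_mul]; ring
          _ ≤ 64 * (16 * M * N) * (A^5)^k := by gcongr
          _ = 1024 * M * N * (A^(5*k)) := by rw [pow_mul]; ring
          _ ≤ A^3 * N * A^(5*(r+2)) := by
            gcongr
            linarith
      refine b1.trans_lt ?_
      have b2 : A^(3*r) ≤ A^3 * N := hr2.trans (by gcongr)
      have b3 : (A^3 * N * A^(5*(r+2)))^3 < (N^3)^3 := by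
        calc (A^3 * N * A^(5*(r+2)))^3 = A^39 * N^3 * (A^(3*r))^5 := by ring
          _ ≤ A^39 * N^3 * (A^3 * N)^5 := by gcongr
          _ = A^54 * N^8 := by ring
          _ < N * N^8 := by gcongr
          _ = (N^3)^3 := by ring
      exact lt_of_pow_lt_pow_left₀ 3 (by positivity) b3
    exact lt_of_pow_lt_pow_left₀ 3 hN.le h1
  have s1 := pade_step t D E ht hD hE hM B N hEB hN happ (r+1) (c1 _ le_rfl) (c2 _ (by omega))
  have s2 := pade_step t D E ht hD hE hM B N hEB hN happ (r+2) (c1 _ (by omega)) (c2 _ le_rfl)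
  obtain ⟨c, hc0, hc⟩ := det_eq (r+1)
  have h1 := congrArg (aeval (sq3^3/t)) hc
  simp only [map_sub, map_mul, map_pow, aeval_X, aeval_C] at h1
  have hE0 : E ≠ 0 := by rintro rfl; simp at hEB; linarith
  have ht0 : t ≠ 0 := by rintro rfl; simp at hMdef; linarith
  have hsq : sq3 ≠ 0 := by
    intro h
    have := sq3_sq
    rw [h] at this; norm_num at this
  have h2 : (algebraMap ℚ ℂ c * (sq3^3/t)^(2*(r+1)+1)) * E = 0 := by
    rw [← h1]
    linear_combination (aeval (sq3^3/t) (Qp (r+1+1))) * s1 - (aeval (sq3^3/t) (Qp (r+1))) * s2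
  have h3 : algebraMap ℚ ℂ c ≠ 0 := by simpa using hc0
  exact mul_ne_zero (mul_ne_zero h3 (pow_ne_zero _ (div_ne_zero (pow_ne_zero _ hsq) ht0))) hE0 h2

lemma om_ne : ∀ a : ℝ, (a:ℂ) - om ≠ 0 := by
  intro a h
  have := congrArg Complex.im h
  simp [om] at this

lemma om_ne' : ∀ a : ℝ, (a:ℂ) - om^2 ≠ 0 := by
  intro a h
  rw [om_sq] at h
  have := congrArg Complex.im h
  simp [om] at this

lemma om_cube : om^3 = 1 := by
  linear_combination (om - 1) * om_sq

/-- Cube of the Moebius quotient at a root of the cubic. -/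
lemma u_cube (m : ℤ) (a : ℝ) (fa : a^3 - m*a^2 - (m+3)*a - 1 = 0) :
    ((a:ℂ) - om)^3 * (m + 3 + 3*om) = ((a:ℂ) - om^2)^3 * (m - 3*om) := by
  have h : (a:ℂ)^3 - m*a^2 - (m+3)*a - 1 = 0 := by exact_mod_cast congrArg (fun x : ℝ => (x:ℂ)) fa
  rw [om_sq]
  have e3 := om_cube
  have e2 := om_sq
  have e4 : om^4 = om := by linear_combination om * e3
  linear_combination (3 * (2*om+1)) * h + (27*a+9-3*m)*e2 + (18*a+6-2*m)*e3

lemma tau_normSq (m : ℤ) : ‖(m:ℂ) + 3 + 3*om‖^2 = (m:ℝ)^2 + 3*m + 9 := by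
  rw [← Complex.normSq_eq_norm_sq]
  have := Eis_normSq (m+3) 3
  push_cast at this
  rw [this]; ring

lemma tau_normSq' (m : ℤ) : ‖(m:ℂ) - 3*om‖^2 = (m:ℝ)^2 + 3*m + 9 := by
  rw [← Complex.normSq_eq_norm_sq]
  have := Eis_normSq m (-3)
  push_cast at this
  rw [show (m:ℂ) - 3*om = m + -3*om by ring, this]; ring

lemma c_normSq (c : ℝ) : ‖(c:ℂ) - om^2‖^2 = c^2 + c + 1 := by
  rw [← Complex.normSq_eq_norm_sq, om_sq, Complex.normSq_apply]
  have h3 : √3 * √3 = 3 := Real.mul_self_sqrt (by norm_num)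
  simp [om]
  linear_combination (1/4) * h3

lemma tau_mem (m : ℤ) : (m:ℂ) + 3 + 3*om ∈ Eis := ⟨m+3, 3, by push_cast; ring⟩
lemma tau_mem' (m : ℤ) : (m:ℂ) - 3*om ∈ Eis := ⟨m, -3, by push_cast; ring⟩

lemma tau_sub (m : ℤ) : (m:ℂ) - 3*om = (m + 3 + 3*om) + sq3^3 := by
  have h : sq3^3 = -3 * sq3 := by linear_combination sq3 * sq3_sq
  rw [h, sq3]; ring

lemma sq3_norm1 : ‖sq3‖ = √3 := by
  rw [eq_comm, Real.sqrt_eq_iff_mul_self_eq (by norm_num) (norm_nonneg _), ← sq3_norm]; ring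

lemma y_cube (x : ℂ) : ((1+x)^(1/3:ℂ))^3 = 1 + x := by
  have := Complex.cpow_nat_inv_pow (1+x) (n := 3) (by norm_num)
  simpa only [Nat.cast_ofNat, one_div] using this

lemma y_near (x : ℂ) (hx : ‖x‖ ≤ 1/4) : ‖(1+x)^(1/3:ℂ) - 1‖ ≤ 2 * ‖x‖ := by
  have := rem_bound 0 x hx
  have e : aeval x (Qp 0) = 1 := by rw [aeval_Qp]; simp [qc]
  have e2 : aeval x (Pp 0) = 1 := by rw [aeval_Pp]; simp [Sc, qc]
  rw [e, e2] at this
  simpa using this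

lemma cube_unique (u y : ℂ) (h : u^3 = y^3) (hu : ‖u-1‖ ≤ 1/10) (hy : ‖y-1‖ ≤ 1/10) : u = y := by
  by_contra hne
  have h1 : (u-y)*(u^2+u*y+y^2) = 0 := by linear_combination h
  have h2 : u^2+u*y+y^2 = 0 := (mul_eq_zero.1 h1).resolve_left (sub_ne_zero.2 hne)
  set p := u-1
  set q := y-1
  have h3 : (3:ℂ) = -(3*p + 3*q + p^2+p*q+q^2) := by simp only [p, q]; linear_combination h2
  have h4 : ‖(3:ℂ)‖ ≤ 3*‖p‖ + 3*‖q‖ + ‖p‖^2+‖p‖*‖q‖+‖q‖^2 := by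
    rw [h3, norm_neg]
    refine (norm_add_le _ _).trans ?_
    gcongr
    · refine (norm_add_le _ _).trans ?_
      gcongr
      · refine (norm_add_le _ _).trans ?_
        gcongr
        · refine (norm_add_le _ _).trans ?_
          simp
        · simp
      · simp
    · simp
  simp only [Complex.norm_ofNat] at h4
  nlinarith [norm_nonneg p, norm_nonneg q]

lemma u_sub_one (a : ℝ) : ((a:ℂ)-om)/(a-om^2) - 1 = -sq3/(a - om^2) := by
  have := om_ne' a
  field_simp
  rw [sq3, om_sq]; ring

lemma tau_big (m : ℤ) (hm : 35732 ≤ m) : (m:ℝ) + 1 ≤ ‖(m:ℂ) + 3 + 3*om‖ := by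
  have hm' : (35732:ℝ) ≤ m := by exact_mod_cast hm
  refine le_of_sq_le_sq ?_ (norm_nonneg _)
  rw [tau_normSq]; nlinarith

lemma u_eq_y (m : ℤ) (hm : 35732 ≤ m) (a : ℝ) (ha : m + 1 < a) (fa : a^3 - m*a^2 - (m+3)*a - 1 = 0) :
    (1 + sq3^3/((m:ℂ)+3+3*om))^(1/3:ℂ) = ((a:ℂ)-om)/(a-om^2) := by
  have hm' : (35732:ℝ) ≤ m := by exact_mod_cast hm
  have hb := tau_big m hm
  have ht0 : (m:ℂ)+3+3*om ≠ 0 := by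
    intro h; rw [h, norm_zero] at hb; linarith
  have s3 : √3 ≤ 2 := by rw [Real.sqrt_le_left (by norm_num)]; norm_num
  have hx : ‖sq3^3/((m:ℂ)+3+3*om)‖ ≤ 1/20 := by
    rw [norm_div, norm_pow, sq3_norm1, div_le_iff₀ (by linarith)]
    have : √3^3 ≤ 2^3 := by gcongr
    linarith
  have h0 := om_ne' a
  symm
  apply cube_unique
  · rw [y_cube, div_pow]
    have := u_cube m a fa
    rw [tau_sub] at this
    have h0' := pow_ne_zero 3 h0
    rw [div_eq_iff h0', one_add_div ht0, div_mul_eq_mul_div, eq_div_iff ht0, this, mul_comm]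
  · rw [u_sub_one, norm_div, norm_neg, sq3_norm1]
    have : (20:ℝ) ≤ ‖(a:ℂ) - om^2‖ := by
      refine le_of_sq_le_sq ?_ (norm_nonneg _)
      rw [c_normSq]; nlinarith
    rw [div_le_iff₀ (by linarith)]; linarith
  · refine (y_near _ (by linarith)).trans (by linarith)

lemma eis_div (X Y p q : ℤ) (hpq : p*X+q*Y = 1) (U V : ℂ) (hU : U ∈ Eis) (hV : V ∈ Eis) (hV0 : V ≠ 0)
    (h : ((X:ℂ) + Y*om)^3 * U = ((X:ℂ) + Y*om^2)^3 * V) : ‖(X:ℂ) + Y*om‖^3 ≤ 9 * √3 * ‖V‖ := by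
  have hpq' : (p:ℂ)*X+q*Y = 1 := by exact_mod_cast hpq
  have o2 := om_sq
  set D := (X:ℂ) + Y*om with hD
  set E := (X:ℂ) + Y*om^2 with hE
  set u := D * (q - p*om^2) with hu
  set v := E * (-q + p*om) with hv
  have hs : u + v = sq3 := by
    rw [hu, hv, hD, hE, sq3]
    linear_combination (2*om+1)*hpq' + (-p*X - q*Y) * o2
  have memZ : ∀ k : ℤ, (k:ℂ) ∈ Eis := fun k => int_mem k
  have hDm : D ∈ Eis := ⟨X, Y, rfl⟩
  have o2m : om^2 ∈ Eis := Subring.pow_mem _ om_mem 2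
  have hEm : E ∈ Eis := Subring.add_mem _ (memZ X) (Subring.mul_mem _ (memZ Y) o2m)
  have g1 : (q:ℂ) - p*om^2 ∈ Eis := Subring.sub_mem _ (memZ q) (Subring.mul_mem _ (memZ p) o2m)
  have g2 : -(q:ℂ) + p*om ∈ Eis := Subring.add_mem _ (Subring.neg_mem _ (memZ q)) (Subring.mul_mem _ (memZ p) om_mem)
  have um : u ∈ Eis := Subring.mul_mem _ hDm g1
  have vm : v ∈ Eis := Subring.mul_mem _ hEm g2
  have m5 : (5:ℂ) ∈ Eis := by exact_mod_cast memZ 5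
  have m10 : (10:ℂ) ∈ Eis := by exact_mod_cast memZ 10
  set W := (q - p*om^2)^3 * (u^2+5*u*v+10*v^2) * V + (-q + p*om)^3 * (10*u^2+5*u*v+v^2) * U with hW
  have Wm : W ∈ Eis := by
    refine Subring.add_mem _ (Subring.mul_mem _ (Subring.mul_mem _ (Subring.pow_mem _ g1 3) ?_) hV)
      (Subring.mul_mem _ (Subring.mul_mem _ (Subring.pow_mem _ g2 3) ?_) hU)
    · exact Subring.add_mem _ (Subring.add_mem _ (Subring.pow_mem _ um 2) (Subring.mul_mem _ (Subring.mul_mem _ m5 um) vm))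
        (Subring.mul_mem _ m10 (Subring.pow_mem _ vm 2))
    · exact Subring.add_mem _ (Subring.add_mem _ (Subring.mul_mem _ m10 (Subring.pow_mem _ um 2)) (Subring.mul_mem _ (Subring.mul_mem _ m5 um) vm))
        (Subring.pow_mem _ vm 2)
  have key : sq3^5 * V = D^3 * W := by
    rw [← hs, hW]
    have e1 : u^3 = D^3 * (q - p*om^2)^3 := by rw [hu]; ring
    have e2 : v^3 = E^3 * (-q + p*om)^3 := by rw [hv]; ring
    have : (u+v)^5 = u^3*(u^2+5*u*v+10*v^2) + v^3*(10*u^2+5*u*v+v^2) := by ring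
    rw [this, e1, e2]
    linear_combination (-(-q + p*om)^3 * (10*u^2+5*u*v+v^2)) * h
  have s0 : sq3 ≠ 0 := by intro h; have := sq3_sq; rw [h] at this; norm_num at this
  have W0 : W ≠ 0 := by
    intro h0
    rw [h0, mul_zero] at key
    exact (mul_ne_zero (pow_ne_zero 5 s0) hV0) key
  have nW := Eis_norm Wm W0
  have := congrArg norm key
  rw [norm_mul, norm_mul, norm_pow, norm_pow, sq3_norm1] at this
  have h35 : √3^5 = 9*√3 := by
    have : √3^2 = 3 := Real.sq_sqrt (by norm_num)
    calc √3^5 = (√3^2)^2*√3 := by ring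
      _ = _ := by rw [this]; ring
  rw [← h35, this]
  nlinarith [pow_nonneg (norm_nonneg D) 3]

set_option maxHeartbeats 1000000 in
lemma real_main (m n n' T : ℤ) (hm : 35732 ≤ m) (hmn : m < n) (hn' : n' = n ∨ n' = -n-3) (a c : ℝ)
    (ha : m + 1 < a) (ha2 : a ≤ m + 2) (fa : a^3 - m*a^2 - (m+3)*a - 1 = 0)
    (fc : c^3 - n'*c^2 - (n'+3)*c - 1 = 0) (hc1 : (n:ℝ)^2+3*n+3 ≤ c^2+c+1) (hc2 : |c| ≤ n + 3)
    (c0 : c ≠ 0) (c1 : 1 + c ≠ 0)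
    (hT : (T:ℝ) = a*c + 1/((1+a)*(1+c)) + (1+1/a)*(1+1/c)) (gap : a^60 ≤ |c|) : False := by
  have hm' : (35732:ℝ) ≤ m := by exact_mod_cast hm
  have hmn' : (m:ℝ) < n := by exact_mod_cast hmn
  have a0 : a ≠ 0 := by linarith
  have a1 : 1 + a ≠ 0 := by linarith
  have hmeq : (m:ℝ) = (a^3-3*a-1)/(a*(1+a)) := by
    rw [eq_div_iff (mul_ne_zero a0 a1)]; linear_combination -fa
  have hneq : (n':ℝ) = (c^3-3*c-1)/(c*(1+c)) := by
    rw [eq_div_iff (mul_ne_zero c0 c1)]; linear_combination -fc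
  have hn2 : (15:ℝ) ≤ (n:ℝ)^2 + 3*n := by nlinarith
  set κ : ℝ := 1 + 1/((1+a)*(1+c)) + 1/(a*c) with hκ
  have eX : ((T+3+m : ℤ):ℝ) = κ*(a*c+1+a) := by
    push_cast; rw [hT, hmeq, hκ]; field_simp; ring
  have eY : ((m-n' : ℤ):ℝ) = κ*(a-c) := by
    push_cast; rw [hneq, hmeq, hκ]; field_simp; ring
  have hY0 : m - n' ≠ 0 := by omega
  obtain ⟨X, Y, g, hg0, hcop, hX, hY⟩ : ∃ X Y g : ℤ, g ≠ 0 ∧ IsCoprime X Y ∧ T+3+m = g*X ∧ m-n' = g*Y := by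
    have hgp : 0 < Int.gcd (T+3+m) (m-n') := Int.gcd_pos_of_ne_zero_right _ hY0
    obtain ⟨X, Y, h1, h2, h3⟩ := Int.exists_gcd_one hgp
    exact ⟨X, Y, Int.gcd (T+3+m) (m-n'), by exact_mod_cast hgp.ne', Int.isCoprime_iff_gcd_eq_one.2 h1,
      by rw [mul_comm]; exact h2, by rw [mul_comm]; exact h3⟩
  obtain ⟨p, q, hpq⟩ := hcop
  have gC : (g:ℂ) ≠ 0 := by exact_mod_cast hg0
  have o2 := om_sq
  have o3 := om_cube
  have na := om_ne' a
  have nc := om_ne' c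
  have eXC : (g:ℂ)*X = κ*(a*c+1+a) := by
    have := congrArg (fun x : ℝ => (x:ℂ)) eX
    rw [hX] at this
    push_cast at this; exact this
  have eYC : (g:ℂ)*Y = κ*(a-c) := by
    have := congrArg (fun x : ℝ => (x:ℂ)) eY
    rw [hY] at this
    push_cast at this; exact this
  set D : ℂ := X + Y*om with hD
  set E : ℂ := X + Y*om^2 with hE
  have gD : g * D = κ*((c-om^2)*(a-om)) := by
    rw [hD]; linear_combination eXC + om * eYC + (κ:ℂ)*a*o2 - (κ:ℂ)*o3
  have gE : g * E = κ*((c-om)*(a-om^2)) := by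
    rw [hE, o2]; linear_combination eXC + (-1-om) * eYC - (κ:ℂ)*o3 - (κ:ℂ)*(-om)*o2
  have hDE : D * ((c-om)*(a-om^2)) = E * ((c-om^2)*(a-om)) := by
    apply mul_left_cancel₀ gC
    linear_combination ((c-om)*(a-om^2)) * gD - ((c-om^2)*(a-om)) * gE
  set t : ℂ := (m:ℂ)+3+3*om with ht
  set t' : ℂ := (n':ℂ)+3+3*om with ht'
  have ua := u_cube m a fa
  have uc := u_cube n' c fc
  have hcube : D^3 * (((n':ℂ)-3*om)*t) = E^3*(t'*((m:ℂ)-3*om)) := by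
    apply mul_left_cancel₀ (mul_ne_zero (pow_ne_zero 3 na) (pow_ne_zero 3 nc))
    have h3 := congrArg (fun z => z^3) hDE
    simp only [mul_pow] at h3
    linear_combination (t*t') * h3 + (-D^3*(a-om^2)^3*t)*uc + (E^3*(c-om^2)^3*t') * ua
  have nsq : ((n':ℝ))^2+3*n'+9 = (n:ℝ)^2+3*n+9 := by
    rcases hn' with h | h <;> rw [h] <;> push_cast <;> ring
  have Nsq : ‖t'‖^2 = (n:ℝ)^2+3*n+9 := by rw [ht', tau_normSq, nsq]
  have Npos : (n:ℝ)+1 ≤ ‖t'‖ := by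
    refine le_of_sq_le_sq ?_ (norm_nonneg _)
    rw [Nsq]; nlinarith
  have Mbig := tau_big m hm
  have Mup : ‖t‖ ≤ m + 3 := by
    refine le_of_sq_le_sq ?_ (by linarith)
    rw [ht, tau_normSq]; nlinarith
  have Meq : ‖(m:ℂ)-3*om‖ = ‖t‖ := by
    rw [← sq_eq_sq₀ (norm_nonneg _) (norm_nonneg _), tau_normSq', ht, tau_normSq]
  have tp0 : t' ≠ 0 := by rw [← norm_pos_iff]; linarith
  have tb0 : (m:ℂ)-3*om ≠ 0 := by rw [← norm_pos_iff, Meq]; linarith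
  have hB3 := eis_div X Y p q hpq _ _ (Subring.mul_mem _ (tau_mem' n') (tau_mem m))
    (Subring.mul_mem _ (tau_mem n') (tau_mem' m)) (mul_ne_zero tp0 tb0) hcube
  rw [norm_mul, Meq, ← ht', ← hD] at hB3
  have hED : ‖E‖ = ‖D‖ := by
    rw [← sq_eq_sq₀ (norm_nonneg _) (norm_nonneg _), ← Complex.normSq_eq_norm_sq, ← Complex.normSq_eq_norm_sq,
      hD, hE, o2, Eis_normSq, show (X:ℂ) + Y*(-1-om) = ((X-Y:ℤ):ℂ) + ((-Y:ℤ):ℂ)*om by push_cast; ring, Eis_normSq]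
    push_cast; ring
  have D0 : D ≠ 0 := by
    intro h0
    have := Eis_normSq X Y
    rw [← hD, h0, map_zero] at this
    have h2 : X^2-X*Y+Y^2 = 0 := by exact_mod_cast this.symm
    have : Y = 0 := by nlinarith [sq_nonneg (2*X-Y), sq_nonneg Y]
    rw [this, mul_zero] at hY
    exact hY0 hY
  refine pade_contra t D E (tau_mem m) ⟨X, Y, rfl⟩ ?_ (by linarith) ‖D‖ ‖t'‖ (norm_pos_iff.2 D0) hED ?_ ?_ ?_
  · exact ⟨X-Y, -Y, by rw [hE, o2]; push_cast; ring⟩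
  · rw [ht, u_eq_y m hm a ha fa]
    have e1 : ((a:ℂ)-om)/(a-om^2)*E - D = (((c:ℂ)-om)/(c-om^2) - 1)*D := by
      have : ((a:ℂ)-om)/(a-om^2)*E = ((c:ℂ)-om)/(c-om^2)*D := by
        rw [div_mul_eq_mul_div, div_mul_eq_mul_div, div_eq_div_iff na nc]
        linear_combination -hDE
      rw [this]; ring
    rw [e1, u_sub_one, norm_mul, norm_div, norm_neg, sq3_norm1]
    have ncp : 0 < ‖(c:ℂ)-om^2‖ := norm_pos_iff.2 nc
    have : √3/‖(c:ℂ)-om^2‖ ≤ 2/‖t'‖ := by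
      rw [div_le_div_iff₀ ncp (by linarith)]
      refine le_of_sq_le_sq ?_ (by positivity)
      rw [mul_pow, mul_pow, Nsq, c_normSq, Real.sq_sqrt (by norm_num)]
      linarith
    calc _ ≤ 2/‖t'‖ * ‖D‖ := by gcongr
      _ = _ := by ring
  · refine hB3.trans ?_
    have s3 : √3 ≤ 16/9 := by rw [Real.sqrt_le_left (by norm_num)]; norm_num
    have := norm_nonneg t
    have := norm_nonneg t'
    calc 9*√3*(‖t'‖*‖t‖) ≤ 9*(16/9)*(‖t'‖*‖t‖) := by gcongr
      _ = _ := by ring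
  · have h1 : (‖t‖/27)^54 ≤ a^54 := by
      gcongr; linarith
    have h2 : 1 ≤ a^54 := one_le_pow₀ (by linarith)
    have h3 : 4 ≤ a^6 := by
      calc (4:ℝ) ≤ 4^6 := by norm_num
        _ ≤ a^6 := by gcongr; linarith
    have h4 : a^60 = a^54*a^6 := by ring
    have h5 : a^54*4 ≤ a^54*a^6 := by gcongr
    linarith

lemma one_add_pow_le (x : ℝ) (hx0 : 0 ≤ x) (hx : x ≤ 1/35733) (k : ℕ) (hk : k ≤ 60) : (1+x)^k ≤ 1 + 61*x := by
  have h1 : (1+x)^k ≤ (1+x)^60 := pow_le_pow_right₀ (by linarith) hk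
  have h2 : (1+x)^60 ≤ Real.exp (60*x) := by
    calc (1+x)^60 ≤ (Real.exp x)^60 := by
          gcongr; linarith [Real.add_one_le_exp x]
      _ = _ := by rw [← Real.exp_nat_mul]; norm_num
  have h3 := Real.abs_exp_sub_one_sub_id_le (x := 60*x) (by rw [abs_of_nonneg (by linarith)]; linarith)
  have h4 := (abs_le.1 h3).2
  nlinarith

lemma gap_real (r c : ℝ) (hr : 35733 ≤ r) (hc : r < |c|) (hc2 : |c| < r^60) :
    ∃ (k : ℕ) (u : ℤ),
      |(c*(r⁻¹)^k - u) * (-1/(1+c) * (-(1+r))^k - u) * (-(1+c)/c*(-(r/(1+r)))^k - u)| < 1 ∧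
      -(1+c)/c*(-(r/(1+r)))^k - u ≠ 0 := by
  have r0 : 0 < r := by linarith
  have r1 : 1 ≤ r := by linarith
  have hC0 : 0 < |c| := by linarith
  have c0 : c ≠ 0 := abs_pos.1 hC0
  have hex : ∃ k : ℕ, |c|^2 < r^(2*k+1) := by
    refine ⟨60, ?_⟩
    calc |c|^2 < (r^60)^2 := by gcongr
      _ = r^120 := by ring
      _ ≤ r^(2*60+1) := pow_le_pow_right₀ r1 (by norm_num)
  classical
  obtain ⟨k, hk1, hk2⟩ : ∃ k : ℕ, |c|^2 < r^(2*k+1) ∧ ∀ j < k, ¬ |c|^2 < r^(2*j+1) :=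
    ⟨Nat.find hex, Nat.find_spec hex, fun j hj => Nat.find_min hex hj⟩
  have hk60 : k ≤ 60 := by
    by_contra h
    refine hk2 60 (by omega) ?_
    calc |c|^2 < (r^60)^2 := by gcongr
      _ = r^120 := by ring
      _ ≤ r^(2*60+1) := pow_le_pow_right₀ r1 (by norm_num)
  have hkpos : k ≠ 0 := by
    rintro rfl
    norm_num at hk1
    rw [← sq_abs] at hk1
    nlinarith
  obtain ⟨j, rfl⟩ := Nat.exists_eq_succ_of_ne_zero hkpos
  have hj := hk2 j (by omega)
  push Not at hj
  set k := j.succ with hk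
  set P := r^k with hP
  have P0 : 0 < P := by positivity
  have b1 : |c|^2 ≤ r * P^2 := by
    have : r^(2*k+1) = r*P^2 := by rw [hP]; ring
    linarith
  have b2 : P^2 ≤ r * |c|^2 := by
    have : P^2 = r * r^(2*j+1) := by rw [hP, hk]; simp only [Nat.succ_eq_add_one]; ring
    rw [this]; gcongr
  set s := √r with hs
  have ss : s^2 = r := Real.sq_sqrt r0.le
  have s189 : 189 ≤ s := by
    rw [hs]; apply Real.le_sqrt_of_sq_le; norm_num; linarith
  have d1 : |c| ≤ s * P := by
    refine le_of_sq_le_sq ?_ (by positivity)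
    rw [mul_pow, ss]; exact b1
  have d2 : P ≤ s * |c| := by
    refine le_of_sq_le_sq ?_ (by positivity)
    rw [mul_pow, ss]; exact b2
  set x := 1/r with hx
  have x0 : 0 < x := by positivity
  have x1 : x ≤ 1/35733 := by rw [hx]; gcongr
  have hxr : x * r = 1 := by rw [hx]; field_simp
  have hpow := one_add_pow_le x x0.le x1 k hk60
  have hpow1 : 1 + x ≤ (1+x)^k := by
    calc 1 + x = (1+x)^1 := by ring
      _ ≤ _ := pow_le_pow_right₀ (by linarith) (by omega)
  have hcx : |1/c| < x := by
    rw [abs_div, abs_one, hx]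
    exact one_div_lt_one_div_of_lt r0 hc
  have uabs : |((-1:ℝ))^(k+1)| = 1 := by rw [abs_pow]; simp
  have w2 : -(1+c)/c*(-(r/(1+r)))^k - (-1)^(k+1) = (-1)^(k+1) * ((1+1/c) - (1+x)^k) / (1+x)^k := by
    have e : r/(1+r) = 1/(1+x) := by rw [hx]; field_simp; ring
    have e2 : (1+x)^k ≠ 0 := by positivity
    rw [e, neg_pow, div_pow, one_pow]
    field_simp
    ring
  have w2n : (1+1/c) - (1+x)^k ≠ 0 := by
    have := (abs_lt.1 hcx).2
    linarith
  refine ⟨k, (-1)^(k+1), ?_, ?_⟩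
  · push_cast
    rw [w2, abs_mul, abs_mul]
    have f2 : |(-1)^(k+1) * ((1+1/c) - (1+x)^k) / (1+x)^k| ≤ 62*x := by
      rw [abs_div, abs_mul, uabs, one_mul, abs_of_pos (show 0 < (1+x)^k by positivity)]
      have h1 : |(1+1/c) - (1+x)^k| ≤ 62*x := by
        rw [abs_le]; have := abs_lt.1 hcx; constructor <;> linarith
      calc _ ≤ |(1+1/c) - (1+x)^k| / 1 := by
            gcongr; linarith
        _ ≤ _ := by rw [div_one]; exact h1
    set t := |c|/P with ht
    have t0 : 0 < t := by positivity
    have htP : |c| = t * P := by rw [ht]; field_simp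
    have t1 : t ≤ s := by rw [ht, div_le_iff₀ P0]; exact d1
    have t2 : 1/t ≤ s := by rw [ht, one_div_div, div_le_iff₀ hC0]; exact d2
    have f0 : |c*(r⁻¹)^k - (-1)^(k+1)| ≤ t + 1 := by
      refine (abs_sub _ _).trans ?_
      rw [uabs]
      gcongr
      rw [inv_pow, abs_mul, abs_inv, abs_of_pos (show 0 < r^k from P0), ← div_eq_mul_inv]
    have f1 : |-1/(1+c) * (-(1+r))^k - (-1)^(k+1)| ≤ 1.01*(1/t) + 1 := by
      refine (abs_sub _ _).trans ?_
      rw [uabs]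
      gcongr
      have h1 : |c| - 1 ≤ |1+c| := by
        have := abs_sub_abs_le_abs_sub c (-1)
        rw [abs_neg, abs_one] at this
        rwa [add_comm, ← sub_neg_eq_add]
      have h2 : |c| * 0.999 ≤ |1+c| := by linarith
      rw [abs_mul, abs_div, abs_neg, abs_one, abs_pow, abs_neg, abs_of_pos (show 0 < 1+r by linarith)]
      have e : (1+r)^k = (1+x)^k * P := by
        rw [hP, ← mul_pow]; congr 1; linear_combination -hxr
      rw [e, div_mul_eq_mul_div, div_le_iff₀ (by linarith), one_mul]
      calc (1+x)^k * P ≤ 1.008 * P := by gcongr; linarith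
        _ ≤ 1.01 * (1/t) * ((t*P) * 0.999) := by
          have : 1.01 * (1/t) * ((t*P) * 0.999) = 1.01*0.999*P := by field_simp
          rw [this]; nlinarith
        _ ≤ _ := by rw [← htP]; gcongr
    have sx : s * x * s = 1 := by rw [← hxr, ← ss]; ring
    have sx1 : s * x ≤ 1/189 := by
      rw [le_div_iff₀ (by norm_num)]
      calc s*x*189 ≤ s*x*s := by gcongr
        _ = 1 := sx
    calc _ ≤ (t+1)*(1.01*(1/t)+1)*(62*x) := by gcongr
      _ = (2.01 + t + 1.01*(1/t))*(62*x) := by field_simp; ring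
      _ ≤ (2.01 + s + 1.01*s)*(62*x) := by gcongr
      _ = 2.01*62*x + 2.01*62*(s*x) := by ring
      _ < 1 := by linarith
  · push_cast
    rw [w2]
    exact div_ne_zero (mul_ne_zero (pow_ne_zero _ (by norm_num)) w2n) (by positivity)

section simplest
variable {F : Type*} [Field F]

lemma sc_ne (m : ℤ) (x : F) (hx : x^3 - m*x^2 - (m+3)*x - 1 = 0) : x ≠ 0 ∧ 1 + x ≠ 0 := by
  constructor
  · rintro rfl
    simp at hx
  · intro h
    have : x = -1 := by linear_combination h
    rw [this] at hx
    have : (1:F) = 0 := by linear_combination hx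
    exact one_ne_zero this

lemma sc_next (m : ℤ) (x : F) (hx : x^3 - m*x^2 - (m+3)*x - 1 = 0) :
    (-1/(1+x))^3 - m*(-1/(1+x))^2 - (m+3)*(-1/(1+x)) - 1 = 0 := by
  obtain ⟨h0, h1⟩ := sc_ne m x hx
  field_simp
  linear_combination -hx

lemma sc_factor (m : ℤ) (x z : F) (hx : x^3 - m*x^2 - (m+3)*x - 1 = 0) (hz : z^3 - m*z^2 - (m+3)*z - 1 = 0) :
    z = x ∨ z = -1/(1+x) ∨ z = -1/(1 + -1/(1+x)) := by
  obtain ⟨h0, h1⟩ := sc_ne m x hx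
  have e : (1:F) + -1/(1+x) = x/(1+x) := by field_simp; ring
  have key : (z - x)*((1+x)*z+1)*(x*z+(1+x)) = 0 := by
    linear_combination (x*(1+x)) * hz - (z*(1+z)) * hx
  rcases mul_eq_zero.1 key with h | h
  · rcases mul_eq_zero.1 h with h | h
    · left; linear_combination h
    · right; left; rw [eq_div_iff h1]; linear_combination h
  · right; right; rw [e, eq_div_iff (div_ne_zero h0 h1)]; field_simp; linear_combination h

lemma sc_integral (m : ℤ) (x : F) (hx : x^3 - m*x^2 - (m+3)*x - 1 = 0) : IsIntegral ℤ x := by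
  refine ⟨X^3 - C m * X^2 - C (m+3) * X - 1, ?_, ?_⟩
  · monicity!
  · simp only [eval₂_sub, eval₂_mul, eval₂_pow, eval₂_X, eval₂_C, eval₂_one]
    simpa using hx

lemma sc_inv_integral (m : ℤ) (x : F) (hx : x^3 - m*x^2 - (m+3)*x - 1 = 0) : IsIntegral ℤ x⁻¹ := by
  have h := sc_integral m x hx
  have e : x⁻¹ = x^2 - (m:F)*x - ((m+3 : ℤ):F) := by
    obtain ⟨h0, h1⟩ := sc_ne m x hx
    field_simp
    push_cast
    linear_combination -hx
  rw [e]
  exact ((h.pow 2).sub ((isIntegral_algebraMap (x := m)).mul h)).sub (isIntegral_algebraMap (x := m+3))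

lemma sc_pick {R : Type*} [Field R] (σ : F →+* F) (ι : F →+* R) (m : ℤ) (x : F)
    (hx : x^3 - m*x^2 - (m+3)*x - 1 = 0) (hσ : σ x = -1/(1+x))
    (r : R) (hr : r^3 - m*r^2 - (m+3)*r - 1 = 0) :
    ∃ y : F, y^3 - m*y^2 - (m+3)*y - 1 = 0 ∧ σ y = -1/(1+y) ∧ ι y = r := by
  have hx1 := sc_next m x hx
  have hx2 := sc_next m _ hx1
  have s1 : σ (-1/(1+x)) = -1/(1 + -1/(1+x)) := by simp [hσ]
  have s2 : σ (-1/(1 + -1/(1+x))) = -1/(1 + -1/(1 + -1/(1+x))) := by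
    conv_lhs => rw [map_div₀, map_add, s1]
    simp
  have hιx : (ι x)^3 - m*(ι x)^2 - (m+3)*(ι x) - 1 = 0 := by
    have := congrArg ι hx
    simpa [map_ofNat ι 3] using this
  rcases sc_factor m _ _ hιx hr with h | h | h
  · exact ⟨x, hx, hσ, h.symm⟩
  · exact ⟨_, hx1, s1, by rw [h]; simp⟩
  · exact ⟨_, hx2, s2, by rw [h]; simp⟩

end simplest

lemma sc_real_root (m : ℤ) (hm : 0 ≤ m) : ∃ r : ℝ, m + 1 < r ∧ r < m + 2 ∧ r^3 - m*r^2 - (m+3)*r - 1 = 0 := by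
  have hm' : (0:ℝ) ≤ m := by exact_mod_cast hm
  have hc : ContinuousOn (fun r : ℝ => r^3 - m*r^2 - (m+3)*r - 1) (Set.Icc (m+1) (m+2)) := by fun_prop
  have := intermediate_value_Ioo (by linarith : (m:ℝ)+1 ≤ m+2) hc
  obtain ⟨r, hr, hr2⟩ := this (show (0:ℝ) ∈ _ by constructor <;> nlinarith)
  exact ⟨r, hr.1, hr.2, hr2⟩

lemma core {K : Type*} [Field K] (σ : K →+* K) (ι : K →+* ℂ)
    (hfix : ∀ z : K, σ z = z → IsIntegral ℤ z → ∃ k : ℤ, z = k)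
    (m n n' : ℤ) (hm : 35732 ≤ m) (hmn : m < n) (hn' : n' = n ∨ n' = -n-3) (a0 c0 : K)
    (ha0 : a0^3 - m*a0^2 - (m+3)*a0 - 1 = 0) (hc0 : c0^3 - n'*c0^2 - (n'+3)*c0 - 1 = 0)
    (sa0 : σ a0 = -1/(1+a0)) (sc0 : σ c0 = -1/(1+c0)) : False := by
  have hm' : (35732:ℝ) ≤ m := by exact_mod_cast hm
  have hmn' : (m:ℝ) + 1 ≤ n := by exact_mod_cast hmn
  obtain ⟨r, hr1, hr2, hr⟩ := sc_real_root m (by omega)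
  obtain ⟨q, hq1, hq2, hq⟩ := sc_real_root n (by omega)
  obtain ⟨r', hr', hc1, hc2, hc3⟩ : ∃ r' : ℝ, r'^3 - n'*r'^2 - (n'+3)*r' - 1 = 0 ∧
      (n:ℝ)^2+3*n+3 ≤ r'^2+r'+1 ∧ |r'| ≤ n + 3 ∧ r < |r'| := by
    rcases hn' with h | h
    · refine ⟨q, by rw [h]; exact hq, by nlinarith, ?_, ?_⟩
      · rw [abs_of_pos (by linarith)]; linarith
      · rw [abs_of_pos (by linarith)]; linarith
    · refine ⟨-(1+q), by rw [h]; push_cast; linear_combination -hq, by nlinarith, ?_, ?_⟩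
      · rw [abs_neg, abs_of_pos (by linarith)]; linarith
      · rw [abs_neg, abs_of_pos (by linarith)]; linarith
  obtain ⟨a, ha, sa, ia⟩ := sc_pick σ ι m a0 ha0 sa0 (r:ℂ) (by exact_mod_cast congrArg (fun x : ℝ => (x:ℂ)) hr)
  obtain ⟨c, hc, sc, ic⟩ := sc_pick σ ι n' c0 hc0 sc0 (r':ℂ) (by exact_mod_cast congrArg (fun x : ℝ => (x:ℂ)) hr')
  obtain ⟨an0, an1⟩ := sc_ne m a ha
  obtain ⟨cn0, cn1⟩ := sc_ne n' c hc
  obtain ⟨rn0, rn1⟩ := sc_ne m r hr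
  obtain ⟨qn0, qn1⟩ := sc_ne n' r' hr'
  have sa1 : σ (-1/(1+a)) = -(1+a)/a := by
    have : (1:K) + -1/(1+a) = a/(1+a) := by field_simp; ring
    rw [map_div₀, map_add, sa, map_neg, map_one, this]; field_simp
  have sa2 : σ (-(1+a)/a) = a := by
    rw [map_div₀, map_neg, map_add, sa, map_one]; field_simp; ring
  have sc1 : σ (-1/(1+c)) = -(1+c)/c := by
    have : (1:K) + -1/(1+c) = c/(1+c) := by field_simp; ring
    rw [map_div₀, map_add, sc, map_neg, map_one, this]; field_simp
  have sc2 : σ (-(1+c)/c) = c := by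
    rw [map_div₀, map_neg, map_add, sc, map_one]; field_simp; ring
  have iσ : ∀ z : K, IsIntegral ℤ z → IsIntegral ℤ (σ z) := fun z hz => map_isIntegral_int σ hz
  have Ia := sc_integral m a ha
  have Ic := sc_integral n' c hc
  have Iai := sc_inv_integral m a ha
  have gap : r^60 ≤ |r'| := by
    by_contra hlt
    push Not at hlt
    obtain ⟨k, u, hlt1, hne⟩ := gap_real r r' (by linarith) hc3 hlt
    set w0 : K := c*(a⁻¹)^k - u with hw0
    set w1 : K := -1/(1+c) * (-(1+a))^k - u with hw1
    set w2 : K := -(1+c)/c * (-(a/(1+a)))^k - u with hw2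
    have t0 : σ w0 = w1 := by
      rw [hw0, hw1, map_sub, map_mul, map_pow, map_inv₀, sa, sc, map_intCast]
      congr 3; field_simp
    have t1 : σ w1 = w2 := by
      rw [hw1, hw2, map_sub, map_mul, map_pow, sc1, map_neg, map_add, sa, map_intCast, map_one]
      congr 3; field_simp; ring
    have t2 : σ w2 = w0 := by
      rw [hw0, hw2, map_sub, map_mul, map_pow, sc2, map_neg, map_div₀, map_add, sa, map_intCast, map_one]
      congr 3; field_simp; ring_nf; field_simp
    have I0 : IsIntegral ℤ w0 := (Ic.mul (Iai.pow k)).sub (isIntegral_algebraMap (x := u))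
    have I1 : IsIntegral ℤ w1 := t0 ▸ iσ _ I0
    have I2 : IsIntegral ℤ w2 := t1 ▸ iσ _ I1
    obtain ⟨z, hz⟩ := hfix (w0*w1*w2) (by rw [map_mul, map_mul, t0, t1, t2]; ring) ((I0.mul I1).mul I2)
    have j2 : ι w2 = ((-(1+r')/r'*(-(r/(1+r)))^k - u : ℝ):ℂ) := by
      rw [hw2]; simp [ia, ic]
    have hιz : (z:ℂ) = (((r'*(r⁻¹)^k - u) * (-1/(1+r') * (-(1+r))^k - u) * (-(1+r')/r'*(-(r/(1+r)))^k - u) : ℝ):ℂ) := by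
      have := congrArg ι hz
      rw [map_mul, map_mul, map_intCast, j2] at this
      rw [← this, hw0, hw1]; simp [ia, ic]
    have hzr : (z:ℝ) = ((r'*(r⁻¹)^k - u) * (-1/(1+r') * (-(1+r))^k - u) * (-(1+r')/r'*(-(r/(1+r)))^k - u)) := by
      exact_mod_cast hιz
    rw [← hzr] at hlt1
    have z0 : z = 0 := by
      have : |z| < 1 := by exact_mod_cast hlt1
      exact Int.abs_lt_one_iff.1 this
    rw [z0, Int.cast_zero] at hz
    have w20 : w2 = 0 := by
      rcases mul_eq_zero.1 hz with h | h
      · rcases mul_eq_zero.1 h with h | h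
        · rw [← t1, ← t0, h]; simp
        · rw [← t1, h]; simp
      · exact h
    rw [w20, map_zero] at j2
    exact hne (by exact_mod_cast j2.symm)
  have I0 : IsIntegral ℤ (a*c) := Ia.mul Ic
  have t0 : σ (a*c) = (-1/(1+a))*(-1/(1+c)) := by rw [map_mul, sa, sc]
  have t1 : σ ((-1/(1+a))*(-1/(1+c))) = (-(1+a)/a)*(-(1+c)/c) := by rw [map_mul, sa1, sc1]
  have t2 : σ ((-(1+a)/a)*(-(1+c)/c)) = a*c := by rw [map_mul, sa2, sc2]
  have I1 := iσ _ I0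
  rw [t0] at I1
  have I2 := iσ _ I1
  rw [t1] at I2
  obtain ⟨T, hT⟩ := hfix (a*c + (-1/(1+a))*(-1/(1+c)) + (-(1+a)/a)*(-(1+c)/c))
    (by rw [map_add, map_add, t0, t1, t2]; ring) ((I0.add I1).add I2)
  have hTr : (T:ℝ) = r*r' + (-1/(1+r))*(-1/(1+r')) + (-(1+r)/r)*(-(1+r')/r') := by
    have := congrArg ι hT
    simp only [map_add, map_mul, map_div₀, map_neg, map_one, ia, ic, map_intCast] at this
    exact_mod_cast this.symm
  refine real_main m n n' T hm hmn hn' r r' hr1 hr2.le hr hr' hc1 hc2 qn0 qn1 ?_ gap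
  rw [hTr]; field_simp; ring

lemma no_int_root (m k : ℤ) (hm : 0 ≤ m) (h : k^3 - m*k^2 - (m+3)*k - 1 = 0) : False := by
  have hd : k ∣ 1 := ⟨k^2 - m*k - (m+3), by linear_combination -h⟩
  rcases Int.isUnit_iff.1 (isUnit_of_dvd_one hd) with rfl | rfl
  · linarith
  · linarith

lemma f_monic (m : ℤ) : (f m).Monic := by
  unfold f; monicity!

lemma f_deg (m : ℤ) : (f m).natDegree = 3 := by
  unfold f; compute_degree!

lemma f_aeval {A : Type*} [Field A] [Algebra ℚ A] (m : ℤ) (x : A) :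
    aeval x (f m) = x^3 - m*x^2 - (m+3)*x - 1 := by
  simp [f]

lemma f_irred (m : ℤ) (hm : 0 ≤ m) : Irreducible (f m) := by
  rw [irreducible_iff_roots_eq_zero_of_degree_le_three (by rw [f_deg]; norm_num) (by rw [f_deg])]
  rw [Multiset.eq_zero_iff_forall_notMem]
  intro x hx
  have hx' := (mem_roots'.1 hx).2
  have h1 : x^3 - m*x^2 - (m+3)*x - 1 = 0 := by
    rw [← f_aeval (A := ℚ), coe_aeval_eq_eval]; exact hx'
  obtain ⟨k, hk⟩ := IsIntegrallyClosed.isIntegral_iff.1 (sc_integral m x h1)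
  rw [← hk] at h1
  exact no_int_root m k hm (by simp only [eq_intCast] at h1; exact_mod_cast h1)

lemma sub_root (S : IntermediateField ℚ (AlgebraicClosure ℚ)) (k : ℤ) (x : AlgebraicClosure ℚ) (hx : x ∈ S)
    (h : x^3 - k*x^2 - (k+3)*x - 1 = 0) :
    (⟨x, hx⟩ : S)^3 - k*(⟨x, hx⟩ : S)^2 - (k+3)*(⟨x, hx⟩ : S) - 1 = 0 := by
  apply (algebraMap S (AlgebraicClosure ℚ)).injective
  have h3 : algebraMap S (AlgebraicClosure ℚ) 3 = 3 := map_ofNat _ 3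
  simp only [map_sub, map_pow, map_mul, map_add, map_intCast, map_one, map_zero, h3]
  exact h

theorem stmt2 (m n : ℤ) (hm : -1 ≤ m) (hmn : m < n) (h : L m = L n) : m ≤ 35731 := by
  by_contra hlt
  push Not at hlt
  have exroot : ∀ k : ℤ, ∃ x : (AlgebraicClosure ℚ), x ∈ L k ∧ x^3 - k*x^2 - (k+3)*x - 1 = 0 := by
    intro k
    obtain ⟨x, hx⟩ := IsAlgClosed.exists_aeval_eq_zero (AlgebraicClosure ℚ) (f k) (by
      rw [degree_eq_natDegree (f_monic k).ne_zero, f_deg]; norm_num)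
    refine ⟨x, IntermediateField.subset_adjoin _ _ ?_, by rw [← f_aeval]; exact hx⟩
    exact mem_rootSet.2 ⟨(f_monic k).ne_zero, hx⟩
  obtain ⟨a', ha'm, ha'⟩ := exroot m
  obtain ⟨b', hb'm, hb'⟩ := exroot n
  rw [← h] at hb'm
  let a : L m := ⟨a', ha'm⟩
  let b : L m := ⟨b', hb'm⟩
  have ha : a^3 - m*a^2 - (m+3)*a - 1 = 0 := by
    exact sub_root (L m) _ _ _ ha'
  have hb : b^3 - n*b^2 - (n+3)*b - 1 = 0 := by
    exact sub_root (L m) _ _ _ hb'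
  have : (f m).IsSplittingField ℚ (L m) :=
    IntermediateField.adjoin_rootSet_isSplittingField (IsAlgClosed.splits _)
  have : Normal ℚ (L m) := Normal.of_isSplittingField (f m)
  have : FiniteDimensional ℚ (L m) := IsSplittingField.finiteDimensional (L m) (f m)
  have : IsGalois ℚ (L m) := {}
  have mp : f m = minpoly ℚ a := minpoly.eq_of_irreducible_of_monic (f_irred m (by omega))
    (by rw [f_aeval]; exact ha) (f_monic m)
  obtain ⟨σ, hσ⟩ : ∃ σ : Gal(L m/ℚ), σ a = -1/(1+a) :=
    minpoly.exists_algEquiv_of_root' (Algebra.IsAlgebraic.isAlgebraic a)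
      (by rw [← mp, f_aeval]; exact sc_next m a ha)
  have groot : ∀ (g : Gal(L m/ℚ)) (k : ℤ) (x : L m), x^3 - k*x^2 - (k+3)*x - 1 = 0 →
      (g x)^3 - k*(g x)^2 - (k+3)*(g x) - 1 = 0 := by
    intro g k x hx
    have := congrArg g hx
    simpa [map_ofNat g 3] using this
  have gext : ∀ g g' : Gal(L m/ℚ), g a = g' a → ∀ z, g z = g' z := by
    intro g g' hgg z
    have : (g : L m →ₐ[ℚ] L m) = g' := by
      refine IntermediateField.algHom_ext_of_eq_adjoin _ (s := (f m).rootSet (AlgebraicClosure ℚ)) (S := L m) rfl ?_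
      intro x hx
      have hxL : x ∈ L m := IntermediateField.subset_adjoin _ _ hx
      have hx0 : x^3 - m*x^2 - (m+3)*x - 1 = 0 := by
        rw [← f_aeval]; exact (mem_rootSet.1 hx).2
      have hx1 : (⟨x, hxL⟩ : L m)^3 - m*(⟨x, hxL⟩ : L m)^2 - (m+3)*(⟨x, hxL⟩ : L m) - 1 = 0 := by
        exact sub_root (L m) _ _ _ hx0
      show g ⟨x, hxL⟩ = g' ⟨x, hxL⟩
      rcases sc_factor m a _ ha hx1 with e | e | e <;> rw [e] <;> simp [hgg]
    exact DFunLike.congr_fun this z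
  have sa1 : σ (-1/(1+a)) = -1/(1 + -1/(1+a)) := by simp [hσ]
  have hfix : ∀ z : L m, σ z = z → IsIntegral ℤ z → ∃ k : ℤ, z = k := by
    intro z hz hzint
    have hbot : z ∈ (⊥ : IntermediateField ℚ (L m)) := by
      rw [IsGalois.mem_bot_iff_fixed]
      intro g
      rcases sc_factor m a _ ha (groot g m a ha) with e | e | e
      · exact gext g 1 e z
      · rw [gext g σ (by rw [e, hσ]) z, hz]
      · rw [gext g (σ*σ) (by rw [e, AlgEquiv.mul_apply, hσ, sa1]) z, AlgEquiv.mul_apply, hz, hz]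
    obtain ⟨q, hq⟩ := IntermediateField.mem_bot.1 hbot
    have hqi : IsIntegral ℤ q := by
      rw [← hq] at hzint
      exact (isIntegral_algebraMap_iff (algebraMap ℚ (L m)).injective).1 hzint
    obtain ⟨k, hk⟩ := IsIntegrallyClosed.isIntegral_iff.1 hqi
    refine ⟨k, ?_⟩
    rw [← hq, ← hk]; simp
  let ι : L m →+* ℂ := ((IsAlgClosed.lift : L m →ₐ[ℚ] ℂ) : L m →+* ℂ)
  rcases sc_factor n b _ hb (groot σ n b hb) with e | e | e
  · obtain ⟨k, hk⟩ := hfix b e (sc_integral n b hb)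
    rw [hk] at hb
    exact no_int_root n k (by omega) (by exact_mod_cast hb)
  · exact core (σ : L m →+* L m) ι hfix m n n (by omega) hmn (Or.inl rfl) a b ha hb hσ e
  · obtain ⟨b0, b1⟩ := sc_ne n b hb
    have e1 : (1 : L m) + -1/(1+b) = b/(1+b) := by field_simp; ring
    have e2 : (1 : L m) + b⁻¹ = (1+b)/b := by field_simp; ring
    refine core (σ : L m →+* L m) ι hfix m n (-n-3) (by omega) hmn (Or.inr rfl) a b⁻¹ ha ?_ hσ ?_
    · push_cast
      field_simp
      linear_combination -hb
    · show σ b⁻¹ = _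
      rw [map_inv₀, e, e1, e2]
      field_simp
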